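/- Fix integers m ≥ 2, w ≥ 2, s ≥ 2w+1, and assume d ≥ 2s−1. Fix distinct lines D, R ⊂ ℙ^m with D ∩ R ≠ ∅; set {O} := D ∩ R and let U be the plane spanned by D ∪ R. Let E ⊂ U be a general subset with #E = s−2w−1. Let A_1 ⊂ D be the zero-dimensional degree-(w+1) subscheme of D supported at O; fix O' ∈ R ∖ {O} and let A_2 ⊂ R be the zero-dimensional degree-w subscheme of R supported at O'. Then there is a point P ∈ ⟨ν_d(A_1 ∪ A_2 ∪ E)⟩ such that br(P) = s and sr(P) = 2d+1+s−4w. -/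

import Mathlib

open scoped LinearAlgebra.Projectivization

noncomputable section

/-- The polynomial ring in `m+1` variables over `K`: homogeneous coordinate ring of `ℙ^m`. -/
abbrev PR (K : Type) [Field K] (m : ℕ) : Type := MvPolynomial (Fin (m+1)) K

/-- The space of degree-`d` forms in `m+1` variables. -/
abbrev Hd (K : Type) [Field K] (m d : ℕ) : Submodule K (PR K m) :=
  MvPolynomial.homogeneousSubmodule (Fin (m+1)) K d

/-- Projective `m`-space over `K`. -/
abbrev Pm (K : Type) [Field K] (m : ℕ) := ℙ K (Fin (m+1) → K)

/-- The target projective space `ℙ^n`, `n = C(m+d,m) - 1`, of the degree-`d` Veronese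
embedding, realized as the projectivization of the dual of the space of degree-`d` forms
(the space of degree-`d` symmetric tensors). -/
abbrev PN (K : Type) [Field K] (m d : ℕ) := ℙ K (Module.Dual K (Hd K m d))

variable {K : Type} [Field K] {m : ℕ}

/-- Hilbert function of `R/I` in degree `t`. -/
def hilbQ (I : Ideal (PR K m)) (t : ℕ) : ℕ :=
  Module.finrank K ((Hd K m t).map (Ideal.Quotient.mkₐ K I).toLinearMap)

/-- The degree (length) of the projective scheme defined by `I`: the eventual value of the
Hilbert function of `R/I`. -/
def idealDeg (I : Ideal (PR K m)) : ℕ := Filter.limsup (fun t => hilbQ I t) Filter.atTop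

/-- `h^1(𝓘_Z(d))` for the zero-dimensional scheme `Z` with (saturated) ideal `I`:
it equals `deg Z - dim (R/I)_d`. -/
def h1I (I : Ideal (PR K m)) (d : ℕ) : ℕ := idealDeg I - hilbQ I d

/-- An ideal is homogeneous. -/
def IsHomogI (I : Ideal (PR K m)) : Prop :=
  ∀ f ∈ I, ∀ n : ℕ, MvPolynomial.homogeneousComponent n f ∈ I

/-- An ideal is saturated with respect to the irrelevant maximal ideal. -/
def IsSatI (I : Ideal (PR K m)) : Prop :=
  ∀ f : PR K m, (∀ i, MvPolynomial.X i * f ∈ I) → f ∈ I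

/-- A closed subscheme of `ℙ^m`, given by its saturated homogeneous ideal. -/
structure PSub (K : Type) [Field K] (m : ℕ) where
  I : Ideal (PR K m)
  homog : IsHomogI I
  sat : IsSatI I

/-- A (closed sub)scheme is zero-dimensional iff the Hilbert function of `R/I` is bounded. -/
def IsZeroDimI (I : Ideal (PR K m)) : Prop := ∃ C, ∀ t, hilbQ I t ≤ C

/-- A polynomial vanishes at a projective point (every homogeneous component vanishes
at a representative). -/
def vanishesAt (f : PR K m) (a : Pm K m) : Prop :=
  ∀ n : ℕ, MvPolynomial.eval a.rep (MvPolynomial.homogeneousComponent n f) = 0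

/-- Zero locus of an ideal in `ℙ^m`. -/
def pzeroLocus (I : Ideal (PR K m)) : Set (Pm K m) := {a | ∀ f ∈ I, vanishesAt f a}

/-- The (saturated) homogeneous ideal of a set of points of `ℙ^m`. -/
def idealOfSet (S : Set (Pm K m)) : Ideal (PR K m) :=
  Ideal.span {f : PR K m | (∃ n, f.IsHomogeneous n) ∧ ∀ a ∈ S, MvPolynomial.eval a.rep f = 0}

/-- Saturation of a homogeneous ideal: the smallest saturated homogeneous ideal containing it. -/
def satIdeal (J : Ideal (PR K m)) : Ideal (PR K m) := sInf {J' | J ≤ J' ∧ IsHomogI J' ∧ IsSatI J'}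

/-- The scheme defined by the (saturated) ideal `I` is reduced. -/
def IsReducedI (I : Ideal (PR K m)) : Prop := I = idealOfSet (pzeroLocus I)

/-- Connected component of a zero-dimensional scheme at a point `a`: the largest subscheme
supported at `a`, i.e. the `a`-primary component. -/
def componentAt (I : Ideal (PR K m)) (a : Pm K m) : Ideal (PR K m) :=
  sInf {J | I ≤ J ∧ IsHomogI J ∧ IsSatI J ∧ pzeroLocus J ⊆ {a}}

/-- Residual scheme of `Z` with respect to the hypersurface `f = 0`: the colon ideal `(I_Z : f)`. -/
def resIdeal (I : Ideal (PR K m)) (f : PR K m) : Ideal (PR K m) :=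
  Submodule.colon I (Ideal.span {f})

/-- Degree of the scheme-theoretic intersection of the subschemes defined by `I` and `J`. -/
def interDeg (I J : Ideal (PR K m)) : ℕ := idealDeg (I ⊔ J)

/-- The degree-`d` Veronese image of a vector `v`: the evaluation-at-`v` functional on
degree-`d` forms. -/
def nu (d : ℕ) (v : Fin (m+1) → K) : Module.Dual K (Hd K m d) :=
  (MvPolynomial.aeval v).toLinearMap ∘ₗ (Hd K m d).subtype

/-- The linear span of the Veronese image `ν_d(S)` of a set `S` of points of `ℙ^m`. -/
def dualSpan (d : ℕ) (S : Set (Pm K m)) : Submodule K (Module.Dual K (Hd K m d)) :=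
  Submodule.span K ((fun a => nu d a.rep) '' S)

/-- The linear span `⟨ν_d(Z)⟩` of the Veronese image of the subscheme with ideal `I`:
the annihilator of the degree-`d` part of `I`. -/
def schemeSpanSub (I : Ideal (PR K m)) (d : ℕ) : Submodule K (Module.Dual K (Hd K m d)) where
  carrier := {φ | ∀ f : Hd K m d, (f : PR K m) ∈ I → φ f = 0}
  add_mem' := by
    intro a b ha hb f hf
    simp [LinearMap.add_apply, ha f hf, hb f hf]
  zero_mem' := by intro f hf; simp
  smul_mem' := by
    intro c a ha f hf
    simp [LinearMap.smul_apply, ha f hf]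

/-- `P ∈ ⟨ν_d(Z)⟩`, for `Z` the subscheme with ideal `I`. -/
def inSpanI (I : Ideal (PR K m)) (d : ℕ) (P : PN K m d) : Prop := P.rep ∈ schemeSpanSub I d

/-- `P ∈ ⟨ν_d(S)⟩` for a set `S` of points of `ℙ^m`. -/
def inSpanSet (d : ℕ) (S : Set (Pm K m)) (P : PN K m d) : Prop := P.rep ∈ dualSpan d S

/-- `L` is a linear subspace of `ℙ^m`. -/
def IsLinearSub (L : Set (Pm K m)) : Prop :=
  ∃ W : Submodule K (Fin (m+1) → K), L = {a | a.submodule ≤ W}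

/-- `L` is a line of `ℙ^m`. -/
def IsLine (L : Set (Pm K m)) : Prop :=
  ∃ W : Submodule K (Fin (m+1) → K), Module.finrank K W = 2 ∧ L = {a | a.submodule ≤ W}

/-- `L` is a plane of `ℙ^m`. -/
def IsPlane (L : Set (Pm K m)) : Prop :=
  ∃ W : Submodule K (Fin (m+1) → K), Module.finrank K W = 3 ∧ L = {a | a.submodule ≤ W}

/-- `J` is the (saturated homogeneous) ideal of a conic of `ℙ^m`: a degree-2 curve contained
in a plane (possibly reducible). -/
def IsConic (J : Ideal (PR K m)) : Prop :=
  ∃ (W : Submodule K (Fin (m+1) → K)) (q : PR K m),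
    Module.finrank K W = 3 ∧ q.IsHomogeneous 2 ∧
    q ∉ idealOfSet {a : Pm K m | a.submodule ≤ W} ∧
    J = satIdeal (idealOfSet {a : Pm K m | a.submodule ≤ W} ⊔ Ideal.span {q})

/-- The algebra of polynomial functions on a `K`-vector space. -/
def polyFunctions (K V : Type) [Field K] [AddCommGroup V] [Module K V] : Subalgebra K (V → K) :=
  Algebra.adjoin K {g : V → K | ∃ φ : V →ₗ[K] K, g = ⇑φ}

/-- Zariski closure of a subset of a projective space. -/
def zClosure {V : Type} [AddCommGroup V] [Module K V] (T : Set (ℙ K V)) : Set (ℙ K V) :=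
  {P | ∀ F ∈ polyFunctions K V, (∀ Q ∈ T, ∀ c : K, F (c • Q.rep) = 0) →
    ∀ c : K, F (c • P.rep) = 0}

/-- The Veronese variety `X_{m,d} = ν_d(ℙ^m)` as a subset of `PN K m d`. -/
def XSet (K : Type) [Field K] (m d : ℕ) : Set (PN K m d) :=
  {Q | ∃ a : Pm K m, Q.submodule = Submodule.span K {nu d a.rep}}

/-- The image `ν_d(S)` of a set of points of `ℙ^m`, as a subset of `PN K m d`. -/
def nuSet (d : ℕ) (S : Set (Pm K m)) : Set (PN K m d) :=
  {Q | ∃ a ∈ S, Q.submodule = Submodule.span K {nu d a.rep}}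

/-- The rank of a point `P` of `PN` with respect to a subset `Y ⊆ PN`. -/
def rankWrt {m d : ℕ} (Y : Set (PN K m d)) (P : PN K m d) : ℕ :=
  sInf {r | ∃ S : Finset (PN K m d), ↑S ⊆ Y ∧ S.card = r ∧
    P.rep ∈ Submodule.span K (Projectivization.rep '' (S : Set (PN K m d)))}

/-- The `s`-th secant variety of `Y ⊆ PN`: the Zariski closure of the union of the spans
of `s` points of `Y`. -/
def secantWrt {m d : ℕ} (Y : Set (PN K m d)) (s : ℕ) : Set (PN K m d) :=
  zClosure {Q | ∃ S : Finset (PN K m d), ↑S ⊆ Y ∧ S.card ≤ s ∧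
    Q.rep ∈ Submodule.span K (Projectivization.rep '' (S : Set (PN K m d)))}

/-- The border rank of `P` with respect to `Y ⊆ PN`. -/
def brankWrt {m d : ℕ} (Y : Set (PN K m d)) (P : PN K m d) : ℕ :=
  sInf {s | 0 < s ∧ P ∈ secantWrt Y s}

/-- Symmetric rank. -/
def srank {m : ℕ} (d : ℕ) (P : PN K m d) : ℕ := rankWrt (XSet K m d) P

/-- Border rank. -/
def brank {m : ℕ} (d : ℕ) (P : PN K m d) : ℕ := brankWrt (XSet K m d) P

/-- Cactus rank: minimal degree of a zero-dimensional closed subscheme `E ⊂ ℙ^m` with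
`P ∈ ⟨ν_d(E)⟩`. -/
def crank {m : ℕ} (d : ℕ) (P : PN K m d) : ℕ :=
  sInf {c | ∃ Z : PSub K m, IsZeroDimI Z.I ∧ idealDeg Z.I = c ∧ inSpanI Z.I d P}

/-- `σ_{s,r}(X_{m,d})`. -/
def sigmaSet (K : Type) [Field K] (m d s r : ℕ) : Set (PN K m d) :=
  {P | brank d P = s ∧ srank d P = r}

/-- A property `Φ` holds for a general `k`-tuple of points of the linear subspace of `ℙ^m`
determined by `W`. -/
def GenerallyOn (W : Submodule K (Fin (m+1) → K)) (k : ℕ)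
    (Φ : (Fin k → Pm K m) → Prop) : Prop :=
  ∃ w : Fin 3 → W, Submodule.span K (Set.range fun j => (w j : Fin (m+1) → K)) = W ∧
    ∃ F : MvPolynomial (Fin k × Fin 3) K, F ≠ 0 ∧
      ∀ c : Fin k → Fin 3 → K,
        MvPolynomial.eval (fun p => c p.1 p.2) F ≠ 0 →
        ∀ e : Fin k → Pm K m,
          (∀ i, (e i).submodule = Submodule.span K {∑ j, c i j • (w j : Fin (m+1) → K)}) → Φ e

end

namespace S11

/-- scaling hom -/
noncomputable def scl (K : Type) [Field K] (σ : Type) :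
    MvPolynomial σ K →ₐ[K] Polynomial (MvPolynomial σ K) :=
  MvPolynomial.aeval (fun i => Polynomial.C (MvPolynomial.X i) * Polynomial.X)

theorem scl_of_hom {K : Type} [Field K] {σ : Type} {f : MvPolynomial σ K} {n : ℕ}
    (hf : f.IsHomogeneous n) : scl K σ f = Polynomial.C f * Polynomial.X ^ n := by
  classical
  have hm : ∀ (e : σ →₀ ℕ) (a : K), scl K σ (MvPolynomial.monomial e a) =
      Polynomial.C (MvPolynomial.monomial e a) * Polynomial.X ^ e.degree := by
    intro e a
    simp only [scl, MvPolynomial.aeval_monomial, mul_pow, Finsupp.prod_mul]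
    have h1 : (e.prod fun i k => (Polynomial.X : Polynomial (MvPolynomial σ K)) ^ k)
        = Polynomial.X ^ e.degree := by
      rw [Finsupp.prod, Finset.prod_pow_eq_pow_sum]; rfl
    rw [h1, ← mul_assoc]
    congr 1
    rw [MvPolynomial.monomial_eq, Polynomial.C_mul]
    congr 1
    simp only [Finsupp.prod, map_prod, map_pow]
  conv_lhs => rw [f.as_sum]
  conv_rhs => rw [f.as_sum]
  rw [map_sum, map_sum, Finset.sum_mul]
  refine Finset.sum_congr rfl fun e he => ?_
  rw [hm, hf.degree_eq_sum_deg_support he]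
  rfl

theorem coeff_scl {K : Type} [Field K] {σ : Type} (f : MvPolynomial σ K) (n : ℕ) :
    (scl K σ f).coeff n = MvPolynomial.homogeneousComponent n f := by
  classical
  conv_lhs => rw [← MvPolynomial.sum_homogeneousComponent f]
  rw [map_sum, Polynomial.finsetSum_coeff]
  simp_rw [scl_of_hom (MvPolynomial.homogeneousComponent_isHomogeneous _ f),
    Polynomial.coeff_C_mul_X_pow]
  rw [Finset.sum_ite_eq]
  split_ifs with h
  · rfl
  · rw [MvPolynomial.homogeneousComponent_eq_zero]
    simpa using h

theorem hom_of_scl {K : Type} [Field K] {σ : Type} {f : MvPolynomial σ K}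
    (h : (scl K σ f).natTrailingDegree = (scl K σ f).natDegree) : 
    f.IsHomogeneous (scl K σ f).natDegree := by
  set N := (scl K σ f).natDegree
  have : f = MvPolynomial.homogeneousComponent N f := by
    conv_lhs => rw [← MvPolynomial.sum_homogeneousComponent f]
    by_cases hN : N ∈ Finset.range (f.totalDegree + 1)
    · refine Finset.sum_eq_single_of_mem N hN ?_
      intro b hb hbN
      rw [← coeff_scl]
      rcases lt_or_gt_of_ne hbN with h1 | h1
      · exact Polynomial.coeff_eq_zero_of_lt_natTrailingDegree (h ▸ h1)
      · exact Polynomial.coeff_eq_zero_of_natDegree_lt h1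
    · rw [MvPolynomial.homogeneousComponent_eq_zero N f (by simpa using hN)]
      refine Finset.sum_eq_zero fun b hb => ?_
      rw [← coeff_scl]
      apply Polynomial.coeff_eq_zero_of_lt_natTrailingDegree
      rw [h]
      simp at hN hb
      omega
  rw [this]
  exact MvPolynomial.homogeneousComponent_isHomogeneous _ _

theorem factor_hom {K : Type} [Field K] {σ : Type} {f g : MvPolynomial σ K} {n : ℕ}
    (h : (f * g).IsHomogeneous n) (h0 : f * g ≠ 0) :
    ∃ a b, a + b = n ∧ f.IsHomogeneous a ∧ g.IsHomogeneous b := by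
  have e1 := scl_of_hom h
  rw [map_mul] at e1
  have hne : scl K σ f * scl K σ g ≠ 0 := by
    rw [e1]; simpa using h0
  have hf := left_ne_zero_of_mul hne
  have hg := right_ne_zero_of_mul hne
  have d1 : (scl K σ f * scl K σ g).natDegree = n := by
    rw [e1]; exact Polynomial.natDegree_C_mul_X_pow n _ h0
  have d2 : (scl K σ f * scl K σ g).natTrailingDegree = n := by
    rw [e1, Polynomial.C_mul_X_pow_eq_monomial]; exact Polynomial.natTrailingDegree_monomial h0
  rw [Polynomial.natDegree_mul hf hg] at d1
  rw [Polynomial.natTrailingDegree_mul hf hg] at d2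
  have l1 := Polynomial.natTrailingDegree_le_natDegree (scl K σ f)
  have l2 := Polynomial.natTrailingDegree_le_natDegree (scl K σ g)
  exact ⟨_, _, d1, hom_of_scl (by omega), hom_of_scl (by omega)⟩

/-- quotient of homogeneous is homogeneous -/
theorem quot_hom {K : Type} [Field K] {σ : Type} {f g : MvPolynomial σ K} {n a : ℕ}
    (h : (f * g).IsHomogeneous n) (hf : f.IsHomogeneous a) (h0 : f ≠ 0) :
    g.IsHomogeneous (n - a) := by
  by_cases hg : g = 0
  · subst hg; exact MvPolynomial.isHomogeneous_zero _ _ _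
  · obtain ⟨a', b, hab, ha', hb⟩ := factor_hom h (mul_ne_zero h0 hg)
    have : a' = a := ha'.inj_right hf h0
    have : b = n - a := by omega
    exact this ▸ hb

theorem finrank_hom3 (K : Type) [Field K] (n : ℕ) :
    Module.finrank K (MvPolynomial.homogeneousSubmodule (Fin 3) K n) = (n+2).choose 2 := by
  classical
  rw [MvPolynomial.homogeneousSubmodule_eq_finsupp_supported]
  have e := AddMonoidAlgebra.supportedEquivFinsupp (S := K) (R := K) {d : Fin 3 →₀ ℕ | d.degree = n}
  rw [LinearEquiv.finrank_eq e]
  have : {d : Fin 3 →₀ ℕ | d.degree = n} = ↑(Finset.finsuppAntidiag (Finset.univ : Finset (Fin 3)) n) := by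
    ext d; simp [Finsupp.degree_eq_sum]
  rw [this]
  have := Module.finrank_finsupp_self K (ι := (↑(Finset.finsuppAntidiag (Finset.univ : Finset (Fin 3)) n) : Set (Fin 3 →₀ ℕ)))
  rw [this]
  simp [Finset.card_finsuppAntidiag_nat_eq_choose]
  rw [Nat.add_comm, Nat.choose_symm_add]

instance fd_hom (K : Type) [Field K] (k n : ℕ) :
    Module.Finite K (MvPolynomial.homogeneousSubmodule (Fin k) K n) := 
  Module.Finite.iff_fg.2 (MvPolynomial.homogeneousSubmodule_fg _ _ n)
end S11

namespace S11

theorem ex_eval_ne {K : Type} [Field K] [Infinite K] {σ : Type} {f : MvPolynomial σ K}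
    (h : f ≠ 0) : ∃ x, MvPolynomial.eval x f ≠ 0 := by
  by_contra hc
  push Not at hc
  exact h (MvPolynomial.funext (fun x => by simpa using hc x))

theorem eval_smul' {K : Type} [Field K] {σ : Type} {f : MvPolynomial σ K} {n : ℕ}
    (hf : f.IsHomogeneous n) (c : K) (x : σ → K) :
    MvPolynomial.eval (c • x) f = c ^ n * MvPolynomial.eval x f := by
  rw [MvPolynomial.eval_eq, MvPolynomial.eval_eq, Finset.mul_sum]
  refine Finset.sum_congr rfl fun e he => ?_
  have h1 := hf.degree_eq_sum_deg_support he
  simp only [Pi.smul_apply, smul_eq_mul, mul_pow, Finset.prod_mul_distrib,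
    Finset.prod_pow_eq_pow_sum]
  rw [h1]
  ring

theorem aeval_line_hom {K : Type} [Field K] {σ : Type} {f : MvPolynomial σ K} {n : ℕ}
    (hf : f.IsHomogeneous n) (q : σ → K) :
    MvPolynomial.aeval (fun i => Polynomial.C (q i) * Polynomial.X) f
      = Polynomial.C (MvPolynomial.eval q f) * Polynomial.X ^ n := by
  have h := congrArg (Polynomial.mapAlgHom (MvPolynomial.aeval (R := K) q)) (scl_of_hom hf)
  have e : (Polynomial.mapAlgHom (MvPolynomial.aeval (R := K) q)).comp (scl K σ)
     = MvPolynomial.aeval (fun i => Polynomial.C (q i) * Polynomial.X) := by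
    ext i : 1
    simp [scl]
  rw [← e, AlgHom.comp_apply, h]
  simp [MvPolynomial.coe_aeval_eq_eval]

theorem cons3_1 {K : Type} (a : K) (v : Fin 2 → K) : (Fin.cons a v : Fin 3 → K) 1 = v 0 := rfl
theorem cons3_2 {K : Type} (a : K) (v : Fin 2 → K) : (Fin.cons a v : Fin 3 → K) 2 = v 1 := rfl

/-- linear change of coordinates -/
noncomputable def chg (K : Type) [Field K] (b : Fin 2 → K) :
    MvPolynomial (Fin 3) K ≃ₐ[K] MvPolynomial (Fin 3) K :=
  AlgEquiv.ofAlgHom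
    (MvPolynomial.aeval (Fin.cons (MvPolynomial.X 0) (fun i : Fin 2 =>
      MvPolynomial.X i.succ + MvPolynomial.C (b i) * MvPolynomial.X 0)))
    (MvPolynomial.aeval (Fin.cons (MvPolynomial.X 0) (fun i : Fin 2 =>
      MvPolynomial.X i.succ - MvPolynomial.C (b i) * MvPolynomial.X 0)))
    (by
      ext i : 1
      refine Fin.cases ?_ (fun i => ?_) i <;> simp [MvPolynomial.algHom_C])
    (by
      ext i : 1
      refine Fin.cases ?_ (fun i => ?_) i <;> simp [MvPolynomial.algHom_C])

noncomputable def Th (K : Type) [Field K] (b : Fin 2 → K) :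
    MvPolynomial (Fin 3) K ≃ₐ[K] Polynomial (MvPolynomial (Fin 2) K) :=
  (chg K b).trans (MvPolynomial.finSuccEquiv K 2)

/-- restriction to line -/
noncomputable def res (K : Type) [Field K] {σ : Type} (p q : σ → K) :
    MvPolynomial σ K →ₐ[K] Polynomial K :=
  MvPolynomial.aeval (fun i => Polynomial.C (p i) + Polynomial.C (q i) * Polynomial.X)

theorem eval_res {K : Type} [Field K] {σ : Type} (p q : σ → K) (f : MvPolynomial σ K) (t : K) :
    (res K p q f).eval t = MvPolynomial.eval (p + t • q) f := by
  have e : (Polynomial.aeval t : Polynomial K →ₐ[K] K).comp (res K p q)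
      = MvPolynomial.aeval (p + t • q) := by
    ext i : 1
    simp [res]
    ring
  have := DFunLike.congr_fun e f
  simpa [MvPolynomial.coe_aeval_eq_eval, Polynomial.coe_aeval_eq_eval] using this

theorem Th_map_eval {K : Type} [Field K] (b y : Fin 2 → K) (f : MvPolynomial (Fin 3) K) :
    (Th K b f).map (MvPolynomial.eval y) = res K (Fin.cons 0 y) (Fin.cons 1 b) f := by
  have e : (Polynomial.mapAlgHom (MvPolynomial.aeval (R := K) y)).comp (Th K b).toAlgHom
     = res K (Fin.cons 0 y) (Fin.cons 1 b) := by
    ext i : 1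
    refine Fin.cases ?_ (fun i => ?_) i
    · simp [Th, chg, res, MvPolynomial.finSuccEquiv_X_zero]
    · simp [Th, chg, res, MvPolynomial.finSuccEquiv_X_succ, MvPolynomial.finSuccEquiv_X_zero]
      rw [← MvPolynomial.algebraMap_eq, AlgEquiv.commutes]
      simp [Polynomial.algebraMap_apply]
  have := DFunLike.congr_fun e f
  simpa [MvPolynomial.coe_aeval_eq_eval] using this

theorem chg_hom {K : Type} [Field K] (b : Fin 2 → K) {f : MvPolynomial (Fin 3) K} {n : ℕ}
    (hf : f.IsHomogeneous n) : (chg K b f).IsHomogeneous n := by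
  have := hf.aeval (n := 1) (Fin.cons (MvPolynomial.X 0) (fun i : Fin 2 =>
      MvPolynomial.X i.succ + MvPolynomial.C (b i) * MvPolynomial.X 0)) (by
    intro i
    refine Fin.cases ?_ (fun i => ?_) i
    · exact MvPolynomial.isHomogeneous_X _ _
    · simp only [Fin.cons_succ]
      exact (MvPolynomial.isHomogeneous_X _ _).add
        (by simpa using (MvPolynomial.isHomogeneous_C _ (b i)).mul (MvPolynomial.isHomogeneous_X K (0 : Fin 3))))
  simpa [chg] using this

theorem Th_natDegree_le {K : Type} [Field K] (b : Fin 2 → K) {f : MvPolynomial (Fin 3) K} {n : ℕ}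
    (hf : f.IsHomogeneous n) : (Th K b f).natDegree ≤ n := by
  have h := chg_hom b hf
  simp only [Th, AlgEquiv.trans_apply]
  rw [MvPolynomial.natDegree_finSuccEquiv]
  exact (MvPolynomial.degreeOf_le_totalDegree _ _).trans h.totalDegree_le

theorem Th_coeff {K : Type} [Field K] (b : Fin 2 → K) {f : MvPolynomial (Fin 3) K} {n : ℕ}
    (hf : f.IsHomogeneous n) : (Th K b f).coeff n
      = MvPolynomial.C (MvPolynomial.eval (Fin.cons 1 b : Fin 3 → K) f) := by
  have h := chg_hom b hf
  have h2 : ((Th K b f).coeff n).IsHomogeneous 0 :=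
    h.finSuccEquiv_coeff_isHomogeneous n 0 (by omega)
  obtain ⟨c, hc⟩ : ∃ c, (Th K b f).coeff n = MvPolynomial.C c :=
    ⟨_, (MvPolynomial.totalDegree_eq_zero_iff_eq_C).1 (Nat.le_zero.1 h2.totalDegree_le)⟩
  rw [hc]
  congr 1
  have h3 := congrArg (fun g : Polynomial K => g.coeff n) (Th_map_eval b 0 f)
  simp only [Polynomial.coeff_map, hc, MvPolynomial.eval_C] at h3
  rw [h3]
  have : res K (Fin.cons 0 0 : Fin 3 → K) (Fin.cons 1 b) f =
    MvPolynomial.aeval (fun i => Polynomial.C ((Fin.cons 1 b : Fin 3 → K) i) * Polynomial.X) f := by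
    unfold res
    congr 2
    ext1 i
    refine Fin.cases ?_ (fun i => ?_) i <;> simp
  rw [this, aeval_line_hom hf]
  simp


/-- homogeneous form vanishing on a line is divisible by the equation of the line -/
theorem dvd_of_res {K : Type} [Field K] [Infinite K] (b y : Fin 2 → K) (hy : y 0 ≠ 0)
    {h : MvPolynomial (Fin 3) K} {N : ℕ} (hh : h.IsHomogeneous N)
    (h0 : res K (Fin.cons 0 y) (Fin.cons 1 b) h = 0) :
    (MvPolynomial.C (y 1) * (MvPolynomial.X 1 - MvPolynomial.C (b 0) * MvPolynomial.X 0)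
      - MvPolynomial.C (y 0) * (MvPolynomial.X 2 - MvPolynomial.C (b 1) * MvPolynomial.X 0)) ∣ h := by
  set ℓ : MvPolynomial (Fin 3) K :=
    MvPolynomial.C (y 1) * (MvPolynomial.X 1 - MvPolynomial.C (b 0) * MvPolynomial.X 0)
      - MvPolynomial.C (y 0) * (MvPolynomial.X 2 - MvPolynomial.C (b 1) * MvPolynomial.X 0) with hl
  set Pf : MvPolynomial (Fin 3) K :=
    MvPolynomial.C (y 0)⁻¹ * (MvPolynomial.X 1 - MvPolynomial.C (b 0) * MvPolynomial.X 0) with hP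
  set p : Fin 3 → K := Fin.cons 0 y with hp
  set q : Fin 3 → K := Fin.cons 1 b with hq
  set sg : MvPolynomial (Fin 3) K →ₐ[K] MvPolynomial (Fin 3) K :=
    MvPolynomial.aeval (fun i => MvPolynomial.C (q i) * MvPolynomial.X 0 + MvPolynomial.C (p i) * Pf)
    with hsg
  have hinv : MvPolynomial.C (σ := Fin 3) (y 0) * MvPolynomial.C (y 0)⁻¹ = 1 := by
    rw [← MvPolynomial.C_mul, mul_inv_cancel₀ hy, MvPolynomial.C_1]
  have e1 : (Ideal.Quotient.mkₐ K (Ideal.span {ℓ})).comp sg = Ideal.Quotient.mkₐ K (Ideal.span {ℓ}) := by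
    ext i : 1
    rw [AlgHom.comp_apply, ← sub_eq_zero, ← map_sub, Ideal.Quotient.mkₐ_eq_mk,
      Ideal.Quotient.eq_zero_iff_mem, Ideal.mem_span_singleton, hsg, MvPolynomial.aeval_X]
    fin_cases i
    · simp [hp, hq]
    · refine ⟨0, ?_⟩
      simp [hp, hq, hP, cons3_1, cons3_2]
      linear_combination (MvPolynomial.X 1 - MvPolynomial.C (b 0) * MvPolynomial.X 0) * hinv
    · refine ⟨MvPolynomial.C (y 0)⁻¹, ?_⟩
      simp [hp, hq, hP, cons3_1, cons3_2]
      rw [hl]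
      linear_combination (MvPolynomial.X 2 - MvPolynomial.C (b 1) * MvPolynomial.X 0) * hinv
  have hPne : Pf ≠ 0 := by
    intro h
    have := congrArg (MvPolynomial.eval (Fin.cons 0 y : Fin 3 → K)) h
    simp [hP, hy] at this
  have e2 : sg h = 0 := by
    have : Pf * sg h = 0 := by
      apply MvPolynomial.funext
      intro x
      rw [map_mul, map_zero]
      by_cases hx : MvPolynomial.eval x Pf = 0
      · rw [hx, zero_mul]
      · have h1 : MvPolynomial.eval x (sg h) =
            MvPolynomial.eval ((MvPolynomial.eval x Pf) • (p + (x 0 / MvPolynomial.eval x Pf) • q)) h := by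
          have : ((MvPolynomial.aeval x : MvPolynomial (Fin 3) K →ₐ[K] K).comp sg) =
            MvPolynomial.aeval ((MvPolynomial.eval x Pf) • (p + (x 0 / MvPolynomial.eval x Pf) • q)) := by
            ext i : 1
            simp [hsg, MvPolynomial.coe_aeval_eq_eval, MvPolynomial.aeval_X]
            field_simp
            ring
          simpa [MvPolynomial.coe_aeval_eq_eval] using DFunLike.congr_fun this h
        rw [h1, eval_smul' hh, ← eval_res, h0]
        simp
    exact (mul_eq_zero.1 this).resolve_left hPne
  have e3 := DFunLike.congr_fun e1 h
  rw [AlgHom.comp_apply, e2, map_zero] at e3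
  exact Ideal.mem_span_singleton.1 (Ideal.Quotient.eq_zero_iff_mem.1 e3.symm)

theorem res_degree {K : Type} [Field K] (b y : Fin 2 → K)
    {h : MvPolynomial (Fin 3) K} {N : ℕ} (hh : h.IsHomogeneous N) :
    (res K (Fin.cons 0 y) (Fin.cons 1 b) h).natDegree ≤ N := by
  rw [← Th_map_eval]
  exact Polynomial.natDegree_map_le.trans (Th_natDegree_le b hh)

/-- lifting a polynomial to a form -/
theorem lift_form {K : Type} [Field K] (b y : Fin 2 → K) (hy : y 0 ≠ 0) (A : Polynomial K) (M : ℕ)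
    (hA : A.natDegree ≤ M) : ∃ g : MvPolynomial (Fin 3) K, g.IsHomogeneous M ∧
      res K (Fin.cons 0 y) (Fin.cons 1 b) g = A := by
  set Pf : MvPolynomial (Fin 3) K :=
    MvPolynomial.C (y 0)⁻¹ * (MvPolynomial.X 1 - MvPolynomial.C (b 0) * MvPolynomial.X 0) with hP
  have hPh : Pf.IsHomogeneous 1 := by
    have h2 : (MvPolynomial.X 1 - MvPolynomial.C (b 0) * MvPolynomial.X 0 :
      MvPolynomial (Fin 3) K).IsHomogeneous 1 :=
      (MvPolynomial.isHomogeneous_X _ _).sub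
        (by simpa using (MvPolynomial.isHomogeneous_C _ (b 0)).mul (MvPolynomial.isHomogeneous_X K (0 : Fin 3)))
    simpa using (MvPolynomial.isHomogeneous_C _ (y 0)⁻¹).mul h2
  have rP : res K (Fin.cons 0 y) (Fin.cons 1 b) Pf = 1 := by
    have hinv : Polynomial.C (y 0)⁻¹ * Polynomial.C (y 0) = 1 := by
      rw [← Polynomial.C_mul, inv_mul_cancel₀ hy, Polynomial.C_1]
    simp only [hP, res, map_mul, map_sub, MvPolynomial.aeval_X, MvPolynomial.algHom_C]
    simp [cons3_1]
    exact hinv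
  have rX : res K (Fin.cons 0 y) (Fin.cons 1 b) (MvPolynomial.X (0 : Fin 3)) = Polynomial.X := by
    simp [res]
  refine ⟨∑ k ∈ Finset.range (M+1), MvPolynomial.C (A.coeff k) *
      (MvPolynomial.X 0 ^ k * Pf ^ (M - k)), ?_, ?_⟩
  · refine MvPolynomial.IsHomogeneous.sum _ _ _ fun k hk => ?_
    have h1 := (MvPolynomial.isHomogeneous_C (Fin 3) (A.coeff k)).mul
      (((MvPolynomial.isHomogeneous_X K (0 : Fin 3)).pow k).mul (hPh.pow (M - k)))
    have h2 : 0 + (1 * k + 1 * (M - k)) = M := by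
      have := Finset.mem_range.1 hk; omega
    rwa [h2] at h1
  · rw [map_sum]
    conv_rhs => rw [A.as_sum_range_C_mul_X_pow' (n := M+1) (by omega)]
    refine Finset.sum_congr rfl fun k hk => ?_
    rw [map_mul, map_mul, map_pow, map_pow, rP, rX, one_pow, mul_one, MvPolynomial.algHom_C]
    simp [Polynomial.algebraMap_apply]

theorem ex_center {K : Type} [Field K] [Infinite K] {f : MvPolynomial (Fin 3) K} {α : ℕ}
    (hf : f.IsHomogeneous α) (f0 : f ≠ 0) (P : Finset (Fin 3 → K)) (hP : ∀ p ∈ P, p ≠ 0) :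
    ∃ b : Fin 2 → K, MvPolynomial.eval (Fin.cons 1 b : Fin 3 → K) f ≠ 0 ∧
      ∀ p ∈ P, p 1 - b 0 * p 0 ≠ 0 ∨ p 2 - b 1 * p 0 ≠ 0 := by
  classical
  set Φ : MvPolynomial (Fin 3) K := MvPolynomial.X 0 * f * ∏ p ∈ P.filter (fun p => p 0 ≠ 0),
    (MvPolynomial.C (p 1) * MvPolynomial.X 0 - MvPolynomial.C (p 0) * MvPolynomial.X 1)
  have hΦ : Φ ≠ 0 := by
    refine mul_ne_zero (mul_ne_zero (MvPolynomial.X_ne_zero _) f0) (Finset.prod_ne_zero_iff.2 ?_)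
    intro p hp h
    have := congrArg (MvPolynomial.eval (![0,1,0] : Fin 3 → K)) h
    simp at this
    exact (Finset.mem_filter.1 hp).2 this
  obtain ⟨x, hx⟩ := ex_eval_ne hΦ
  simp only [Φ, map_mul, map_prod] at hx
  have hx12 := left_ne_zero_of_mul hx
  have hx3 := Finset.prod_ne_zero_iff.1 (right_ne_zero_of_mul hx)
  have hx1 : x 0 ≠ 0 := by simpa using left_ne_zero_of_mul hx12
  have hx2 := right_ne_zero_of_mul hx12
  refine ⟨![x 1 / x 0, x 2 / x 0], ?_, ?_⟩
  · have : (Fin.cons 1 ![x 1 / x 0, x 2 / x 0] : Fin 3 → K) = (x 0)⁻¹ • x := by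
      ext i
      fin_cases i <;> simp [cons3_1, cons3_2, hx1] <;> field_simp
    rw [this, eval_smul' hf]
    exact mul_ne_zero (pow_ne_zero _ (inv_ne_zero hx1)) hx2
  · intro p hp
    by_cases h0 : p 0 = 0
    · by_contra hc
      push Not at hc
      apply hP p hp
      simp [h0] at hc
      ext i; fin_cases i <;> simp [h0, hc]
    · left
      have := hx3 p (by simp [hp, h0])
      simp at this
      simp only [Matrix.cons_val_zero]
      intro h
      apply this
      field_simp at h
      linear_combination h

theorem ex_resultant {K : Type} [Field K] (b : Fin 2 → K) {f g : MvPolynomial (Fin 3) K} {α : ℕ}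
    (hf : f.IsHomogeneous α) (hq : MvPolynomial.eval (Fin.cons 1 b : Fin 3 → K) f ≠ 0)
    (hfg : IsRelPrime f g) :
    ∃ (r : MvPolynomial (Fin 2) K) (U V : Polynomial (MvPolynomial (Fin 2) K)), r ≠ 0 ∧
      U * Th K b g + V * Th K b f = Polynomial.C r := by
  classical
  set c := MvPolynomial.eval (Fin.cons 1 b : Fin 3 → K) f with hc
  set F := Polynomial.C (MvPolynomial.C c⁻¹) * Th K b f with hF
  have hcF : F.coeff α = 1 := by
    rw [hF, Polynomial.coeff_C_mul, Th_coeff b hf, ← MvPolynomial.C_mul, ← hc, inv_mul_cancel₀ hq,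
      MvPolynomial.C_1]
  have hmon : F.Monic := Polynomial.monic_of_natDegree_le_of_coeff_eq_one α
    ((Polynomial.natDegree_C_mul_le _ _).trans (Th_natDegree_le b hf)) hcF
  have hrel : IsRelPrime F (Th K b g) := by
    intro d h1 h2
    have h3 : d ∣ Th K b f := by
      have : Th K b f = Polynomial.C (MvPolynomial.C c) * F := by
        rw [hF, ← mul_assoc, ← Polynomial.C_mul, ← MvPolynomial.C_mul, mul_inv_cancel₀ hq]; simp
      rw [this]; exact h1.mul_left _
    have h4 := map_dvd (Th K b).symm h3
    have h5 := map_dvd (Th K b).symm h2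
    rw [AlgEquiv.symm_apply_apply] at h4 h5
    have := (hfg h4 h5).map (Th K b)
    simpa using this
  have hint : Algebra.IsIntegral (MvPolynomial (Fin 2) K) (AdjoinRoot F) := by
    have := hmon.finite_adjoinRoot
    infer_instance
  have hnt : Nontrivial (MvPolynomial (Fin 2) K) := inferInstance
  have halg : IsAlgebraic (MvPolynomial (Fin 2) K) (AdjoinRoot.mk F (Th K b g)) :=
    (hint.isIntegral _).isAlgebraic
  have hnz : AdjoinRoot.mk F (Th K b g) ∈ nonZeroDivisors (AdjoinRoot F) := by
    rw [mem_nonZeroDivisors_iff_right]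
    intro z hz
    induction z using AdjoinRoot.induction_on with
    | ih z =>
      rw [← map_mul, AdjoinRoot.mk_eq_zero] at hz
      rw [AdjoinRoot.mk_eq_zero]
      exact hrel.dvd_of_dvd_mul_right hz
  obtain ⟨r, hr, hdv⟩ := IsAlgebraic.exists_nonzero_dvd halg hnz
  obtain ⟨z, hz⟩ := hdv
  induction z using AdjoinRoot.induction_on with
  | ih z =>
    have : algebraMap (MvPolynomial (Fin 2) K) (AdjoinRoot F) r = AdjoinRoot.mk F (Polynomial.C r) := rfl
    rw [this, ← map_mul, AdjoinRoot.mk_eq_mk] at hz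
    obtain ⟨V, hV⟩ := hz
    refine ⟨r, z, V * Polynomial.C (MvPolynomial.C c⁻¹), hr, ?_⟩
    rw [hF] at hV
    linear_combination -hV

theorem regularity {K : Type} [Field K] [Infinite K] {f g : MvPolynomial (Fin 3) K} {α β : ℕ}
    (hf : f.IsHomogeneous α) (hg : g.IsHomogeneous β) (f0 : f ≠ 0) (hfg : IsRelPrime f g)
    (P : Finset (Fin 3 → K)) (hP : ∀ p ∈ P, p ≠ 0) :
    ∃ ℓ : MvPolynomial (Fin 3) K, ℓ.IsHomogeneous 1 ∧ (∀ p ∈ P, MvPolynomial.eval p ℓ ≠ 0) ∧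
      ∀ N, α + β ≤ N + 1 → ∀ h : MvPolynomial (Fin 3) K, h.IsHomogeneous N →
        ∃ A B h' : MvPolynomial (Fin 3) K, h'.IsHomogeneous (N - 1) ∧
          h = A * f + B * g + ℓ * h' := by
  classical
  obtain ⟨b, hb, hbP⟩ := ex_center hf f0 P hP
  obtain ⟨r, U, V, hr, hUV⟩ := ex_resultant b hf hb hfg
  obtain ⟨y, hy⟩ : ∃ y : Fin 2 → K, MvPolynomial.eval y (r * MvPolynomial.X 0 * ∏ p ∈ P,
      (MvPolynomial.C (p 1 - b 0 * p 0) * MvPolynomial.X 1 - MvPolynomial.C (p 2 - b 1 * p 0) * MvPolynomial.X 0)) ≠ 0 := by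
    refine ex_eval_ne (mul_ne_zero (mul_ne_zero hr (MvPolynomial.X_ne_zero _)) (Finset.prod_ne_zero_iff.2 ?_))
    intro p hp h
    have h1 := congrArg (MvPolynomial.eval (![0,1] : Fin 2 → K)) h
    have h2 := congrArg (MvPolynomial.eval (![1,0] : Fin 2 → K)) h
    simp at h1 h2
    rcases hbP p hp with h3 | h3
    · exact h3 h1
    · exact h3 (by linear_combination -h2)
  simp only [map_mul, map_prod] at hy
  have hy12 := left_ne_zero_of_mul hy
  have hy3 := Finset.prod_ne_zero_iff.1 (right_ne_zero_of_mul hy)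
  have hr0 := left_ne_zero_of_mul hy12
  have hy0 : y 0 ≠ 0 := by simpa using right_ne_zero_of_mul hy12
  set ℓ : MvPolynomial (Fin 3) K :=
    MvPolynomial.C (y 1) * (MvPolynomial.X 1 - MvPolynomial.C (b 0) * MvPolynomial.X 0)
      - MvPolynomial.C (y 0) * (MvPolynomial.X 2 - MvPolynomial.C (b 1) * MvPolynomial.X 0) with hl
  have hlin : ∀ (c e : K) (i : Fin 3), (MvPolynomial.C c * (MvPolynomial.X i - MvPolynomial.C e * MvPolynomial.X 0) :
      MvPolynomial (Fin 3) K).IsHomogeneous 1 := by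
    intro c e i
    have h2 : (MvPolynomial.X i - MvPolynomial.C e * MvPolynomial.X 0 :
      MvPolynomial (Fin 3) K).IsHomogeneous 1 :=
      (MvPolynomial.isHomogeneous_X _ _).sub
        (by simpa using (MvPolynomial.isHomogeneous_C _ e).mul (MvPolynomial.isHomogeneous_X K (0 : Fin 3)))
    simpa using (MvPolynomial.isHomogeneous_C _ c).mul h2
  have hlh : ℓ.IsHomogeneous 1 := (hlin _ _ _).sub (hlin _ _ _)
  have hl0 : ℓ ≠ 0 := by
    intro h
    have := congrArg (MvPolynomial.eval (![0,0,1] : Fin 3 → K)) h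
    simp [hl, hy0] at this
  refine ⟨ℓ, hlh, ?_, ?_⟩
  · intro p hp h
    apply hy3 p hp
    simp [hl] at h ⊢
    linear_combination h
  · intro N hN h hh
    set ρ := res K (Fin.cons 0 y : Fin 3 → K) (Fin.cons 1 b) with hρ
    set c := MvPolynomial.eval (Fin.cons 1 b : Fin 3 → K) f with hc
    have hFc : (ρ f).coeff α = c := by
      rw [hρ, ← Th_map_eval, Polynomial.coeff_map, Th_coeff b hf, MvPolynomial.eval_C]
    set F := Polynomial.C c⁻¹ * ρ f with hF
    have hFf : ρ f = Polynomial.C c * F := by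
      rw [hF, ← mul_assoc, ← Polynomial.C_mul, mul_inv_cancel₀ hb]; simp
    have hFm : F.Monic := Polynomial.monic_of_natDegree_le_of_coeff_eq_one α
      ((Polynomial.natDegree_C_mul_le _ _).trans (res_degree b y hf))
      (by rw [hF, Polynomial.coeff_C_mul, hFc, inv_mul_cancel₀ hb])
    have hFd : F.natDegree = α := by
      apply le_antisymm
      · exact ((Polynomial.natDegree_C_mul_le _ _).trans (res_degree b y hf))
      · apply Polynomial.le_natDegree_of_ne_zero
        rw [hF, Polynomial.coeff_C_mul, hFc, inv_mul_cancel₀ hb]; exact one_ne_zero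
    have hbez : ∃ u v : Polynomial K, u * ρ g + v * F = 1 := by
      have h1 := congrArg (Polynomial.map (MvPolynomial.eval y)) hUV
      simp only [Polynomial.map_add, Polynomial.map_mul, Th_map_eval, Polynomial.map_C] at h1
      refine ⟨Polynomial.C (MvPolynomial.eval y r)⁻¹ * U.map (MvPolynomial.eval y),
        Polynomial.C (MvPolynomial.eval y r)⁻¹ * V.map (MvPolynomial.eval y) * Polynomial.C c, ?_⟩
      have h2 : Polynomial.C (MvPolynomial.eval y r)⁻¹ * Polynomial.C (MvPolynomial.eval y r) = 1 := by
        rw [← Polynomial.C_mul, inv_mul_cancel₀ hr0, Polynomial.C_1]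
      rw [← hρ, hFf] at h1
      linear_combination Polynomial.C (MvPolynomial.eval y r)⁻¹ * h1 + h2
    obtain ⟨u, v, huv⟩ := hbez
    set H := ρ h with hH
    have hHd : H.natDegree ≤ N := res_degree b y hh
    set B := (H * u) %ₘ F with hB
    set A := (H * u) /ₘ F * ρ g + H * v with hA
    have hHAB : H = A * F + B * ρ g := by
      have := Polynomial.modByMonic_add_div (H * u) F
      rw [hA, hB]
      linear_combination (-H) * huv - ρ g * this
    have hgd : (ρ g).natDegree ≤ β := res_degree b y hg
    have hBd : α = 0 ∧ B = 0 ∨ B.natDegree < α := by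
      by_cases h1 : F = 1
      · left
        refine ⟨by rw [← hFd, h1]; simp, by rw [hB, h1, Polynomial.modByMonic_one]⟩
      · right
        rw [← hFd]; exact Polynomial.natDegree_modByMonic_lt _ hFm h1
    have hBg : (B * ρ g).natDegree ≤ N := by
      rcases hBd with ⟨_, h1⟩ | h1
      · rw [h1]; simp
      · refine Polynomial.natDegree_mul_le.trans ?_
        omega
    have hAF : (A * F).natDegree ≤ N := by
      have : A * F = H - B * ρ g := by rw [hHAB]; ring
      rw [this]
      exact (Polynomial.natDegree_sub_le _ _).trans (max_le hHd hBg)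
    have key : ∃ A' B' : MvPolynomial (Fin 3) K, (A' * f).IsHomogeneous N ∧
        (B' * g).IsHomogeneous N ∧ ρ (A' * f) = A * F ∧ ρ (B' * g) = B * ρ g := by
      have k1 : ∃ A' : MvPolynomial (Fin 3) K, (A' * f).IsHomogeneous N ∧ ρ (A' * f) = A * F := by
        by_cases hA0 : A = 0
        · exact ⟨0, by simpa using MvPolynomial.isHomogeneous_zero _ _ _, by simp [hA0]⟩
        · rw [mul_comm, hFm.natDegree_mul' hA0, hFd] at hAF
          obtain ⟨A', hA'h, hA'⟩ := lift_form b y hy0 (Polynomial.C c⁻¹ * A) (N - α)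
            ((Polynomial.natDegree_C_mul_le _ _).trans (by omega))
          refine ⟨A', ?_, ?_⟩
          · have := hA'h.mul hf
            rwa [Nat.sub_add_cancel (by omega)] at this
          · rw [map_mul, hρ, hA', ← hρ, hF]; ring
      have k2 : ∃ B' : MvPolynomial (Fin 3) K, (B' * g).IsHomogeneous N ∧ ρ (B' * g) = B * ρ g := by
        rcases hBd with ⟨_, h1⟩ | h1
        · exact ⟨0, by simpa using MvPolynomial.isHomogeneous_zero _ _ _, by simp [h1]⟩
        · obtain ⟨B', hB'h, hB'⟩ := lift_form b y hy0 B (N - β) (by omega)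
          refine ⟨B', ?_, ?_⟩
          · have := hB'h.mul hg
            rwa [Nat.sub_add_cancel (by omega)] at this
          · rw [map_mul, hρ, hB']
      obtain ⟨A', h1, h2⟩ := k1
      obtain ⟨B', h3, h4⟩ := k2
      exact ⟨A', B', h1, h3, h2, h4⟩
    obtain ⟨A', B', h1, h2, h3, h4⟩ := key
    have hz : (h - A' * f - B' * g).IsHomogeneous N := (hh.sub h1).sub h2
    obtain ⟨h', hh'⟩ := dvd_of_res b y hy0 hz (by
      rw [map_sub, map_sub, ← hρ, h3, h4, ← hH, hHAB]; ring)
    refine ⟨A', B', h', quot_hom (hh' ▸ hz) hlh hl0, ?_⟩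
    linear_combination hh'

end S11

namespace S11

abbrev S3 (K : Type) [Field K] := MvPolynomial (Fin 3) K

structure ConicData (K : Type) [Field K] (I : Ideal (S3 K)) (Λ : S3 K →ₗ[K] K) (n : ℕ)
    (P : Finset (Fin 3 → K)) : Prop where
  H1 : ∀ f ∈ I, Λ f = 0
  H2 : ∀ f, (∀ g, Λ (f * g) = 0) → f ∈ I
  fin : Module.Finite K (S3 K ⧸ I)
  H3 : Module.finrank K (S3 K ⧸ I) ≤ n
  H4 : ∀ N, n ≤ N → ∀ h, ∃ F : S3 K, F.IsHomogeneous N ∧ F - h ∈ I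
  P0 : ∀ p ∈ P, p ≠ 0
  H5 : ∀ l : S3 K, (∀ p ∈ P, MvPolynomial.eval p l ≠ 0) → ∃ l', l * l' - 1 ∈ I

noncomputable def hI {K : Type} [Field K] (I : Ideal (S3 K)) (i : ℕ) : ℕ :=
  Module.finrank K ((MvPolynomial.homogeneousSubmodule (Fin 3) K i).map
    (Ideal.Quotient.mkₐ K I).toLinearMap)

theorem hI_dual {K : Type} [Field K] {I : Ideal (S3 K)} {Λ : S3 K →ₗ[K] K} {n : ℕ}
    {P : Finset (Fin 3 → K)} (H : ConicData K I Λ n P) {d : ℕ}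
    (hd : ∀ f : S3 K, f.IsHomogeneous d → Λ f = 0) (i j : ℕ) (hij : i + j = d) :
    hI I i + hI I j ≤ n := by
  have := H.fin
  let L : (S3 K ⧸ I) →ₗ[K] K :=
    ((I.restrictScalars K).liftQ Λ (fun f hf => H.H1 f hf)) ∘ₗ
      (Submodule.Quotient.restrictScalarsEquiv K I).symm.toLinearMap
  have hL : ∀ f, L (Ideal.Quotient.mkₐ K I f) = Λ f := fun f => rfl
  let T : (S3 K ⧸ I) →ₗ[K] Module.Dual K (S3 K ⧸ I) := (LinearMap.mul K (S3 K ⧸ I)).compr₂ L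
  have hT : ∀ a b, T a b = L (a * b) := fun a b => rfl
  have hTi : Function.Injective T := by
    rw [← LinearMap.ker_eq_bot, LinearMap.ker_eq_bot']
    intro a ha
    obtain ⟨f, rfl⟩ := Ideal.Quotient.mk_surjective a
    rw [Ideal.Quotient.eq_zero_iff_mem]
    apply H.H2
    intro g
    have := DFunLike.congr_fun ha (Ideal.Quotient.mk I g)
    rw [hT, ← map_mul] at this
    exact this
  set V := fun i => (MvPolynomial.homogeneousSubmodule (Fin 3) K i).map
    (Ideal.Quotient.mkₐ K I).toLinearMap with hV
  have h1 : (V j).map T ≤ (V i).dualAnnihilator := by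
    rintro _ ⟨_, ⟨f, hf, rfl⟩, rfl⟩
    rw [Submodule.mem_dualAnnihilator]
    rintro _ ⟨g, hg, rfl⟩
    rw [hT]
    simp only [AlgHom.toLinearMap_apply]
    rw [← map_mul, hL]
    apply hd
    have : (f * g).IsHomogeneous (j + i) := MvPolynomial.IsHomogeneous.mul hf hg
    rwa [add_comm, hij] at this
  have h2 := Submodule.finrank_mono h1
  rw [← (Submodule.equivMapOfInjective T hTi (V j)).finrank_eq] at h2
  have h3 := Subspace.finrank_add_finrank_dualAnnihilator_eq (V i)
  have h4 := H.H3
  change Module.finrank K (V i) + Module.finrank K (V j) ≤ n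
  omega

theorem hI_ge {K : Type} [Field K] {I : Ideal (S3 K)} (i c : ℕ)
    (N : Type) [AddCommGroup N] [Module K N] [Module.Finite K N]
    (M : N →ₗ[K] S3 K) (hN : Module.finrank K N ≤ c)
    (hM : ∀ f ∈ I, f.IsHomogeneous i → ∃ x, M x = f) :
    (i+2).choose 2 ≤ hI I i + c := by
  set V := MvPolynomial.homogeneousSubmodule (Fin 3) K i
  let g := (Ideal.Quotient.mkₐ K I).toLinearMap.domRestrict V
  have h1 := LinearMap.finrank_range_add_finrank_ker g
  rw [finrank_hom3] at h1
  have h2 : LinearMap.range g = V.map (Ideal.Quotient.mkₐ K I).toLinearMap :=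
    LinearMap.range_domRestrict _ _
  rw [h2] at h1
  have h3 : (LinearMap.ker g).map V.subtype ≤ LinearMap.range M := by
    rintro _ ⟨f, hf, rfl⟩
    exact hM _ (Ideal.Quotient.eq_zero_iff_mem.1 hf) f.2
  have h4 := Submodule.finrank_mono h3
  rw [← (Submodule.equivMapOfInjective V.subtype V.injective_subtype _).finrank_eq] at h4
  have h5 := LinearMap.finrank_range_le M
  have h6 := (h4.trans h5).trans hN
  rw [← h1]
  exact Nat.add_le_add_left h6 _

theorem key_u {K : Type} [Field K] [Infinite K] {I : Ideal (S3 K)} {Λ : S3 K →ₗ[K] K} {n : ℕ}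
    {P : Finset (Fin 3 → K)} (H : ConicData K I Λ n P) {d : ℕ}
    (hd : ∀ f : S3 K, f.IsHomogeneous d → Λ f = 0) {u f g : S3 K} {e α β : ℕ}
    (hu : u.IsHomogeneous e) (hf : f.IsHomogeneous α) (hg : g.IsHomogeneous β) (f0 : f ≠ 0)
    (hfg : IsRelPrime f g) (huf : u * f ∈ I) (hug : u * g ∈ I) (hed : e ≤ d)
    (hD : α + β + e ≤ d + 2) : u ∈ I := by
  obtain ⟨l, hl, hlP, hreg⟩ := regularity hf hg f0 hfg P H.P0
  obtain ⟨l', hl'⟩ := H.H5 l hlP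
  set D := d - e with hDd
  have step : ∀ k, ∀ h : S3 K, h.IsHomogeneous (D + k) → ∃ h' : S3 K, h'.IsHomogeneous D ∧
      u * h - u * l ^ k * h' ∈ I := by
    intro k
    induction k with
    | zero => intro h hh; exact ⟨h, hh, by simp⟩
    | succ k ih =>
      intro h hh
      obtain ⟨A, B, h1, hh1, e1⟩ := hreg (D + (k+1)) (by omega) h hh
      obtain ⟨h', hh', e2⟩ := ih h1 (by simpa [← add_assoc] using hh1)
      refine ⟨h', hh', ?_⟩
      have : u * h - u * l ^ (k+1) * h' = A * (u * f) + B * (u * g) + l * (u * h1 - u * l ^ k * h') := by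
        rw [e1]; ring
      rw [this]
      exact I.add_mem (I.add_mem (I.mul_mem_left _ huf) (I.mul_mem_left _ hug)) (I.mul_mem_left _ e2)
  apply H.H2
  intro h
  obtain ⟨F, hF, hFh⟩ := H.H4 (D + n) (by omega) (l ^ n * h)
  obtain ⟨h', hh', e2⟩ := step n F hF
  have hlk : (l * l') ^ n - 1 ∈ I := by
    have : (l * l') - 1 ∣ (l * l') ^ n - 1 := sub_one_dvd_pow_sub_one _ n
    exact I.mem_of_dvd this hl'
  have e3 : u * h - u * h' ∈ I := by
    have : u * h - u * h' = l' ^ n * (u * F - u * l ^ n * h') - l' ^ n * u * (F - l ^ n * h)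
        - (u * h - u * h') * ((l * l') ^ n - 1) := by
      rw [mul_pow]; ring
    rw [this]
    exact I.sub_mem (I.sub_mem (I.mul_mem_left _ e2) (I.mul_mem_left _ hFh)) (I.mul_mem_left _ hlk)
  have e4 := H.H1 _ e3
  rw [map_sub, hd (u * h') (by
    have := hu.mul hh'
    rwa [show e + D = d by omega] at this)] at e4
  simpa using e4

theorem hI_ge3 {K : Type} [Field K] [Infinite K] {I : Ideal (S3 K)} {Λ : S3 K →ₗ[K] K} {n : ℕ}
    {P : Finset (Fin 3 → K)} (H : ConicData K I Λ n P) {d : ℕ}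
    (hd : ∀ f : S3 K, f.IsHomogeneous d → Λ f = 0)
    (hno : ∀ q ∈ I, q.IsHomogeneous 2 → q = 0) (i : ℕ) (hi : 2 * i ≤ d + 2) (hid : i ≤ d) :
    3 * i ≤ hI I i := by
  classical
  have hc0 : 3 * i ≤ (i+2).choose 2 := by
    rw [Nat.choose_two_right]
    rw [Nat.le_div_iff_mul_le (by norm_num)]
    rcases i with _ | _ | i
    · simp
    · simp
    · simp; nlinarith
  by_cases hz : ∀ f ∈ I, f.IsHomogeneous i → f = 0
  · have := hI_ge (I := I) i 0 (Fin 0 → K) 0 (by simp) (fun f hf hfh => ⟨0, by simp [hz f hf hfh]⟩)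
    omega
  push Not at hz
  obtain ⟨f1, hf1, hf1h, hf10⟩ := hz
  have hex : ∃ a, ∃ g ∈ I, g.IsHomogeneous a ∧ g ≠ 0 := ⟨i, f1, hf1, hf1h, hf10⟩
  set a := Nat.find hex with ha
  obtain ⟨g, hgI, hgh, hg0⟩ := Nat.find_spec hex
  have hmin : ∀ b < a, ∀ g ∈ I, g.IsHomogeneous b → g = 0 := by
    intro b hb g hg hgh
    by_contra hne
    exact Nat.find_min hex hb ⟨g, hg, hgh, hne⟩
  have hai : a ≤ i := Nat.find_min' hex ⟨f1, hf1, hf1h, hf10⟩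
  rw [← ha] at hgh
  have ha3 : 3 ≤ a := by
    by_contra hlt
    have : MvPolynomial.X 0 ^ (2 - a) * g = 0 := by
      apply hno _ (I.mul_mem_left _ hgI)
      have := ((MvPolynomial.isHomogeneous_X K (0 : Fin 3)).pow (2 - a)).mul hgh
      rwa [show 1 * (2 - a) + a = 2 by omega] at this
    exact hg0 ((mul_eq_zero.1 this).resolve_left (pow_ne_zero _ (MvPolynomial.X_ne_zero _)))
  by_cases hdv : ∀ f ∈ I, f.IsHomogeneous i → g ∣ f
  · have := hI_ge (I := I) i ((i - a + 2).choose 2)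
      (MvPolynomial.homogeneousSubmodule (Fin 3) K (i - a))
      ((LinearMap.mulLeft K g) ∘ₗ (Submodule.subtype _)) (by rw [finrank_hom3]) (by
        intro f hf hfh
        obtain ⟨x, rfl⟩ := hdv f hf hfh
        exact ⟨⟨x, quot_hom hfh hgh hg0⟩, rfl⟩)
    have h2 : (i - a + 2).choose 2 ≤ (i - 3 + 2).choose 2 := Nat.choose_le_choose _ (by omega)
    obtain ⟨t, rfl⟩ : ∃ t, i = t + 3 := ⟨i - 3, by omega⟩
    have h3 : (t + 3 + 2).choose 2 = 3 * (t + 3) + (t + 3 - 3 + 2).choose 2 := by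
      simp [Nat.choose_succ_succ]; ring
    omega
  · exfalso
    push Not at hdv
    obtain ⟨f, hfI, hfh, hgf⟩ := hdv
    have hf0 : f ≠ 0 := by rintro rfl; exact hgf (dvd_zero _)
    obtain ⟨f', g', u, hrel, huf, hug⟩ := UniqueFactorizationMonoid.exists_reduced_factors f hf0 g
    obtain ⟨e, α, h1, hue, hf'⟩ := factor_hom (huf.symm ▸ hfh) (huf.symm ▸ hf0)
    obtain ⟨e', β, h2, hue', hg'⟩ := factor_hom (hug.symm ▸ hgh) (hug.symm ▸ hg0)
    have hu0 : u ≠ 0 := by rintro rfl; simp at huf; exact hf0 huf.symm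
    have hee : e' = e := hue'.inj_right hue hu0
    subst hee
    have hf'0 : f' ≠ 0 := by rintro rfl; simp at huf; exact hf0 huf.symm
    have huI : u ∈ I := key_u H hd hue hf' hg' hf'0 hrel (huf.symm ▸ hfI) (hug.symm ▸ hgI)
      (by omega) (by omega)
    rcases Nat.lt_or_ge e' a with h3 | h3
    · exact hu0 (hmin _ h3 u huI hue)
    · have hb0 : β = 0 := by omega
      subst hb0
      have hg'0 : g' ≠ 0 := by rintro rfl; simp at hug; exact hg0 hug.symm
      have hc := (MvPolynomial.totalDegree_eq_zero_iff_eq_C).1 (Nat.le_zero.1 hg'.totalDegree_le)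
      have hun : IsUnit g' := by
        rw [hc] at hg'0 ⊢
        refine (IsUnit.mk0 (g'.coeff 0) ?_).map (MvPolynomial.C)
        intro h; rw [h] at hg'0; simp at hg'0
      apply hgf
      rw [← hug, ← huf, hun.mul_right_dvd]
      exact Dvd.intro _ rfl

theorem conic {K : Type} [Field K] [Infinite K] {I : Ideal (S3 K)} {Λ : S3 K →ₗ[K] K} {n : ℕ}
    {P : Finset (Fin 3 → K)} (H : ConicData K I Λ n P) {d : ℕ}
    (hd : ∀ f : S3 K, f.IsHomogeneous d → Λ f = 0) (hn : n < 3 * d) :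
    ∃ q ∈ I, q.IsHomogeneous 2 ∧ q ≠ 0 := by
  by_contra hno
  have hno' : ∀ q ∈ I, q.IsHomogeneous 2 → q = 0 := by
    intro q h1 h2; by_contra h3; exact hno ⟨q, h1, h2, h3⟩
  have h1 := hI_ge3 H hd hno' (d/2) (by omega) (by omega)
  have h2 := hI_ge3 H hd hno' (d - d/2) (by omega) (by omega)
  have h3 := hI_dual H hd (d/2) (d - d/2) (by omega)
  omega

end S11

namespace S11

/-- linear form as polynomial -/
noncomputable def lf {K : Type} [Field K] {σ : Type} [Fintype σ] [DecidableEq σ]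
    (f : (σ → K) →ₗ[K] K) : MvPolynomial σ K :=
  ∑ i, MvPolynomial.C (f (Pi.single i 1)) * MvPolynomial.X i

theorem lf_hom {K : Type} [Field K] {σ : Type} [Fintype σ] [DecidableEq σ]
    (f : (σ → K) →ₗ[K] K) : (lf f).IsHomogeneous 1 := by
  refine MvPolynomial.IsHomogeneous.sum _ _ _ fun i _ => ?_
  simpa using (MvPolynomial.isHomogeneous_C _ (f (Pi.single i 1))).mul (MvPolynomial.isHomogeneous_X K i)

theorem lf_eval {K : Type} [Field K] {σ : Type} [Fintype σ] [DecidableEq σ]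
    (f : (σ → K) →ₗ[K] K) (x : σ → K) : MvPolynomial.eval x (lf f) = f x := by
  conv_rhs => rw [pi_eq_sum_univ' x]
  simp [lf, mul_comm]

theorem lf_res {K : Type} [Field K] {σ : Type} [Fintype σ] [DecidableEq σ]
    (f : (σ → K) →ₗ[K] K) (p q : σ → K) :
    res K p q (lf f) = Polynomial.C (f p) + Polynomial.C (f q) * Polynomial.X := by
  rw [← lf_eval f p, ← lf_eval f q]
  simp only [lf, res, map_sum, map_mul, MvPolynomial.aeval_X, MvPolynomial.algHom_C, 
    MvPolynomial.eval_X, MvPolynomial.eval_C, Finset.sum_mul, ← Finset.sum_add_distrib]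
  refine Finset.sum_congr rfl fun i _ => ?_
  simp [Polynomial.algebraMap_apply]
  ring

theorem ex_dual2 {K : Type} [Field K] {V : Type} [AddCommGroup V] [Module K V] {x y : V}
    (h : LinearIndependent K ![x, y]) : ∃ f : V →ₗ[K] K, f x = 1 ∧ f y = 0 := by
  have hx : x ∉ Submodule.span K {y} := by
    intro hx
    obtain ⟨c, hc⟩ := Submodule.mem_span_singleton.1 hx
    have := (LinearIndependent.pair_iff.1 h) 1 (-c) (by rw [← hc]; simp)
    exact one_ne_zero this.1
  obtain ⟨f, hf, hf2⟩ := Submodule.exists_dual_map_eq_bot_of_notMem hx inferInstance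
  refine ⟨(f x)⁻¹ • f, by simp [hf], ?_⟩
  have : f y ∈ (Submodule.span K {y}).map f := ⟨y, Submodule.mem_span_singleton_self y, rfl⟩
  rw [hf2] at this
  simp at this
  simp [this]

structure Curv (K : Type) [Field K] (ι : Type) where
  p : ι → Fin 3 → K
  v : ι → Fin 3 → K
  n : ι → ℕ
  hn : ∀ c, 1 ≤ n c
  hpv : ∀ c, LinearIndependent K ![p c, v c]
  hpp : ∀ c c', c ≠ c' → LinearIndependent K ![p c, p c']

variable {K : Type} [Field K] {ι : Type}

noncomputable abbrev Curv.r (C : Curv K ι) (c : ι) : S3 K →ₐ[K] Polynomial K := res K (C.p c) (C.v c)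

def Curv.I (C : Curv K ι) : Ideal (S3 K) where
  carrier := {f | ∀ c, Polynomial.X ^ (C.n c) ∣ C.r c f}
  add_mem' := by
    intro a b ha hb c
    rw [map_add]; exact dvd_add (ha c) (hb c)
  zero_mem' := by intro c; simp
  smul_mem' := by
    intro a b hb c
    rw [smul_eq_mul, map_mul]; exact (hb c).mul_left _

theorem Curv.mem_I (C : Curv K ι) (f : S3 K) : f ∈ C.I ↔ ∀ c, Polynomial.X ^ (C.n c) ∣ C.r c f :=
  Iff.rfl

noncomputable def Curv.Psi (C : Curv K ι) : S3 K →ₗ[K] ((Σ c, Fin (C.n c)) → K) :=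
  LinearMap.pi (fun a => (Polynomial.lcoeff K (a.2 : ℕ)) ∘ₗ (C.r a.1).toLinearMap)

theorem Curv.Psi_apply (C : Curv K ι) (f : S3 K) (a : Σ c, Fin (C.n c)) :
    C.Psi f a = (C.r a.1 f).coeff a.2 := rfl

theorem Curv.Psi_eq_zero (C : Curv K ι) (f : S3 K) : C.Psi f = 0 ↔ f ∈ C.I := by
  rw [C.mem_I]
  constructor
  · intro h c
    rw [Polynomial.X_pow_dvd_iff]
    intro j hj
    exact congrFun h ⟨c, j, hj⟩
  · intro h
    ext ⟨c, j, hj⟩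
    exact (Polynomial.X_pow_dvd_iff.1 (h c)) j hj

theorem Curv.ex_G [Fintype ι] [DecidableEq ι] (C : Curv K ι) (c : ι) : ∃ G : S3 K, ∃ e, e + C.n c = ∑ c, C.n c ∧
    G.IsHomogeneous e ∧ (C.r c G).coeff 0 ≠ 0 ∧
    ∀ c', c' ≠ c → Polynomial.X ^ (C.n c') ∣ C.r c' G := by
  have h1 : ∀ c', ∃ M : S3 K, M.IsHomogeneous 1 ∧ (c' ≠ c → (C.r c M).coeff 0 ≠ 0 ∧ Polynomial.X ∣ C.r c' M) := by
    intro c'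
    by_cases h : c' = c
    · exact ⟨0, MvPolynomial.isHomogeneous_zero _ _ _, fun h2 => absurd h h2⟩
    · obtain ⟨f, hf1, hf2⟩ := ex_dual2 (C.hpp c c' (Ne.symm h))
      refine ⟨lf f, lf_hom f, fun _ => ?_⟩
      simp [Curv.r, lf_res, hf1, hf2]
  choose M hM1 hM2 using h1
  refine ⟨∏ c' ∈ Finset.univ.erase c, M c' ^ C.n c', ∑ c' ∈ Finset.univ.erase c, C.n c',
    Finset.sum_erase_add _ _ (Finset.mem_univ c), ?_, ?_, ?_⟩
  · refine MvPolynomial.IsHomogeneous.prod _ _ _ fun c' _ => ?_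
    simpa using (hM1 c').pow (C.n c')
  · rw [map_prod, Polynomial.coeff_zero_prod]
    refine Finset.prod_ne_zero_iff.2 fun c' hc' => ?_
    rw [map_pow, Polynomial.coeff_zero_eq_eval_zero, Polynomial.eval_pow,
      ← Polynomial.coeff_zero_eq_eval_zero]
    exact pow_ne_zero _ (hM2 c' (Finset.ne_of_mem_erase hc')).1
  · intro c' hc'
    rw [map_prod]
    refine Dvd.dvd.trans ?_ (Finset.dvd_prod_of_mem _ (Finset.mem_erase.2 ⟨hc', Finset.mem_univ _⟩))
    rw [map_pow]
    exact pow_dvd_pow_of_dvd (hM2 c' hc').2 _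

theorem Curv.ex_L (C : Curv K ι) (c : ι) : ∃ Lp Lv : S3 K, Lp.IsHomogeneous 1 ∧ Lv.IsHomogeneous 1 ∧
    C.r c Lp = 1 ∧ C.r c Lv = Polynomial.X := by
  obtain ⟨f, hf1, hf2⟩ := ex_dual2 (C.hpv c)
  obtain ⟨g, hg1, hg2⟩ := ex_dual2 (x := C.v c) (y := C.p c) (by
    have := LinearIndependent.pair_symm_iff.1 (C.hpv c); exact this)
  exact ⟨lf f, lf g, lf_hom f, lf_hom g, by simp [Curv.r, lf_res, hf1, hf2], by simp [Curv.r, lf_res, hg1, hg2]⟩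

theorem Curv.ex_lift (C : Curv K ι) (c : ι) (A : Polynomial K) (M : ℕ) (hA : A.natDegree ≤ M) :
    ∃ g : S3 K, g.IsHomogeneous M ∧ C.r c g = A := by
  obtain ⟨Lp, Lv, h1, h2, h3, h4⟩ := C.ex_L c
  refine ⟨∑ k ∈ Finset.range (M+1), MvPolynomial.C (A.coeff k) * (Lv ^ k * Lp ^ (M - k)), ?_, ?_⟩
  · refine MvPolynomial.IsHomogeneous.sum _ _ _ fun k hk => ?_
    have h1 := (MvPolynomial.isHomogeneous_C (Fin 3) (A.coeff k)).mul
      ((h2.pow k).mul (h1.pow (M - k)))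
    have h2 : 0 + (1 * k + 1 * (M - k)) = M := by
      have := Finset.mem_range.1 hk; omega
    rwa [h2] at h1
  · rw [map_sum]
    conv_rhs => rw [A.as_sum_range_C_mul_X_pow' (n := M+1) (by omega)]
    refine Finset.sum_congr rfl fun k hk => ?_
    rw [map_mul, map_mul, map_pow, map_pow, h3, h4, one_pow, mul_one, MvPolynomial.algHom_C]
    simp

theorem Curv.surj [Fintype ι] [DecidableEq ι] (C : Curv K ι) (N : ℕ) (hN : ∑ c, C.n c ≤ N + 1)
    (y : (Σ c, Fin (C.n c)) → K) : ∃ F : S3 K, F.IsHomogeneous N ∧ C.Psi F = y := by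
  have key : ∀ c, ∃ F : S3 K, F.IsHomogeneous N ∧
      (∀ c', c' ≠ c → Polynomial.X ^ (C.n c') ∣ C.r c' F) ∧
      ∀ j : Fin (C.n c), (C.r c F).coeff j = y ⟨c, j⟩ := by
    intro c
    obtain ⟨G, e, he, hG, hG0, hGd⟩ := C.ex_G c
    set g := C.r c G with hg
    have hcop : IsCoprime g (Polynomial.X ^ C.n c) := by
      apply IsCoprime.pow_right
      rw [isCoprime_comm, Polynomial.irreducible_X.coprime_iff_not_dvd, Polynomial.X_dvd_iff]
      exact hG0
    obtain ⟨u, v, huv⟩ := hcop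
    set Y : Polynomial K := ∑ j : Fin (C.n c), Polynomial.C (y ⟨c, j⟩) * Polynomial.X ^ (j : ℕ) with hY
    have hmon : (Polynomial.X ^ C.n c : Polynomial K).Monic := Polynomial.monic_X_pow _
    set B := (Y * u) %ₘ (Polynomial.X ^ C.n c) with hB
    have hn := C.hn c
    have hBd : B.natDegree ≤ N - e := by
      have : B.natDegree < C.n c := by
        have h1 := Polynomial.natDegree_modByMonic_lt (Y * u) hmon (by
          intro h; have := congrArg Polynomial.natDegree h; simp at this; omega)
        simpa using h1
      omega
    obtain ⟨b, hb, hbB⟩ := C.ex_lift c B (N - e) hBd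
    refine ⟨G * b, ?_, ?_, ?_⟩
    · have := hG.mul hb
      rwa [show e + (N - e) = N by omega] at this
    · intro c' hc'
      rw [map_mul]; exact (hGd c' hc').mul_right _
    · intro j
      have h1 : C.r c (G * b) = Y + Polynomial.X ^ C.n c * (-(Y * v) - ((Y * u) /ₘ (Polynomial.X ^ C.n c)) * g) := by
        rw [map_mul, hbB, ← hg, hB]
        have := Polynomial.modByMonic_add_div (Y * u) (Polynomial.X ^ C.n c)
        linear_combination g * this + Y * huv
      rw [h1, Polynomial.coeff_add, Polynomial.coeff_X_pow_mul', if_neg (by have := j.2; omega), add_zero,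
        hY, Polynomial.finsetSum_coeff]
      simp only [Polynomial.coeff_C_mul_X_pow]
      rw [Finset.sum_eq_single j]
      · simp
      · intro k _ hk
        rw [if_neg]
        intro h; exact hk (Fin.ext h.symm)
      · simp
  choose F hF1 hF2 hF3 using key
  refine ⟨∑ c, F c, MvPolynomial.IsHomogeneous.sum _ _ _ fun c _ => hF1 c, ?_⟩
  ext ⟨c, j⟩
  rw [C.Psi_apply, map_sum, Polynomial.finsetSum_coeff, Finset.sum_eq_single c]
  · exact hF3 c j
  · intro c' _ hc'
    exact Polynomial.X_pow_dvd_iff.1 (hF2 c' c (Ne.symm hc')) j j.2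
  · simp

structure Curv.Dat (C : Curv K ι) [Fintype ι] where
  τ : ι → Polynomial K →ₗ[K] K
  α : ι → K
  hα : ∀ c, α c ≠ 0
  h1 : ∀ c g, τ c (Polynomial.X ^ (C.n c) * g) = 0
  h2 : ∀ c g, τ c (Polynomial.X ^ (C.n c - 1) * g) = α c * g.coeff 0

noncomputable def Curv.Dat.Lam {C : Curv K ι} [Fintype ι] (T : C.Dat) : S3 K →ₗ[K] K :=
  ∑ c, (T.τ c) ∘ₗ (C.r c).toLinearMap

theorem Curv.Dat.Lam_apply {C : Curv K ι} [Fintype ι] (T : C.Dat) (f : S3 K) :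
    T.Lam f = ∑ c, T.τ c (C.r c f) := by
  simp [Curv.Dat.Lam]

theorem Curv.Dat.H1 {C : Curv K ι} [Fintype ι] (T : C.Dat) (f : S3 K) (hf : f ∈ C.I) :
    T.Lam f = 0 := by
  rw [T.Lam_apply]
  refine Finset.sum_eq_zero fun c _ => ?_
  obtain ⟨g, hg⟩ := hf c
  rw [hg, T.h1]

theorem Curv.Dat.H2 {C : Curv K ι} [Fintype ι] (T : C.Dat) (f : S3 K)
    (hf : ∀ g, T.Lam (f * g) = 0) : f ∈ C.I := by
  classical
  rw [C.mem_I]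
  intro c
  by_contra hc
  have hf0 : C.r c f ≠ 0 := by intro h; rw [h] at hc; exact hc (dvd_zero _)
  obtain ⟨u, hu, hu0⟩ := Polynomial.exists_eq_pow_rootMultiplicity_mul_and_not_dvd (C.r c f) hf0 0
  set j := (C.r c f).rootMultiplicity 0
  rw [Polynomial.C_0, sub_zero] at hu hu0
  have hj : j < C.n c := by
    by_contra hj
    exact hc (hu ▸ ((pow_dvd_pow _ (not_lt.1 hj)).mul_right _))
  rw [Polynomial.X_dvd_iff] at hu0
  obtain ⟨G, e, he, hG, hG0, hGd⟩ := C.ex_G c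
  obtain ⟨Lp, Lv, _, _, _, hLv⟩ := C.ex_L c
  have h1 := hf (G * Lv ^ (C.n c - 1 - j))
  rw [T.Lam_apply, Finset.sum_eq_single c] at h1
  · have h2 : C.r c (f * (G * Lv ^ (C.n c - 1 - j))) = Polynomial.X ^ (C.n c - 1) * (u * C.r c G) := by
      rw [map_mul, map_mul, map_pow, hLv, hu]
      have : (Polynomial.X : Polynomial K) ^ (C.n c - 1) = Polynomial.X ^ j * Polynomial.X ^ (C.n c - 1 - j) := by
        rw [← pow_add]; congr 1; omega
      rw [this]; ring
    rw [h2, T.h2, Polynomial.mul_coeff_zero] at h1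
    exact mul_ne_zero (T.hα c) (mul_ne_zero hu0 hG0) h1
  · intro c' _ hc'
    obtain ⟨z, hz⟩ := hGd c' hc'
    have : C.r c' (f * (G * Lv ^ (C.n c - 1 - j))) = Polynomial.X ^ (C.n c') *
       (C.r c' f * z * C.r c' (Lv ^ (C.n c - 1 - j))) := by
      rw [map_mul, map_mul, hz]; ring
    rw [this, T.h1]
  · simp

theorem Curv.Dat.conicData {C : Curv K ι} [Fintype ι] [DecidableEq (Fin 3 → K)] (T : C.Dat) :
    ConicData K C.I T.Lam (∑ c, C.n c) (Finset.univ.image C.p) := by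
  classical
  let Q : (S3 K ⧸ C.I) →ₗ[K] ((Σ c, Fin (C.n c)) → K) :=
    ((C.I.restrictScalars K).liftQ C.Psi (fun f hf => (C.Psi_eq_zero f).2 hf)) ∘ₗ
      (Submodule.Quotient.restrictScalarsEquiv K C.I).symm.toLinearMap
  have hQ : ∀ f, Q (Ideal.Quotient.mk C.I f) = C.Psi f := fun f => rfl
  have hQi : Function.Injective Q := by
    rw [← LinearMap.ker_eq_bot, LinearMap.ker_eq_bot']
    intro a ha
    obtain ⟨f, rfl⟩ := Ideal.Quotient.mk_surjective a
    rw [Ideal.Quotient.eq_zero_iff_mem]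
    exact (C.Psi_eq_zero f).1 ha
  have hfin : Module.Finite K (S3 K ⧸ C.I) := Module.Finite.of_injective Q hQi
  refine ⟨T.H1, T.H2, hfin, ?_, ?_, ?_, ?_⟩
  · have := LinearMap.finrank_le_finrank_of_injective hQi
    simpa using this
  · intro N hN h
    obtain ⟨F, hF, hFh⟩ := C.surj N (by omega) (C.Psi h)
    exact ⟨F, hF, by rw [← C.Psi_eq_zero, map_sub, hFh, sub_self]⟩
  · intro p hp
    obtain ⟨c, _, rfl⟩ := Finset.mem_image.1 hp
    exact (C.hpv c).ne_zero 0
  · intro l hl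
    have hinj : Function.Injective (LinearMap.mulLeft K (Ideal.Quotient.mk C.I l)) := by
      rw [← LinearMap.ker_eq_bot, LinearMap.ker_eq_bot']
      intro a ha
      obtain ⟨f, rfl⟩ := Ideal.Quotient.mk_surjective a
      rw [LinearMap.mulLeft_apply, ← map_mul, Ideal.Quotient.eq_zero_iff_mem] at ha
      rw [Ideal.Quotient.eq_zero_iff_mem]
      intro c
      have h1 := ha c
      rw [map_mul] at h1
      refine IsCoprime.dvd_of_dvd_mul_left ?_ h1
      rw [isCoprime_comm]
      apply IsCoprime.pow_right
      rw [isCoprime_comm, Polynomial.irreducible_X.coprime_iff_not_dvd, Polynomial.X_dvd_iff,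
        Polynomial.coeff_zero_eq_eval_zero, eval_res]
      simpa using hl (C.p c) (Finset.mem_image_of_mem _ (Finset.mem_univ c))
    obtain ⟨z, hz⟩ := (LinearMap.injective_iff_surjective.1 hinj) 1
    obtain ⟨f, rfl⟩ := Ideal.Quotient.mk_surjective z
    refine ⟨f, ?_⟩
    rw [← Ideal.Quotient.eq_zero_iff_mem, map_sub, map_mul, map_one, sub_eq_zero]
    exact hz

/-- Gram matrix -/
theorem Curv.Dat.gram {C : Curv K ι} [Fintype ι] (T : C.Dat) (N N' : ℕ)
    (hN : ∑ c, C.n c ≤ N + 1) (hN' : ∑ c, C.n c ≤ N' + 1) :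
    ∃ f g : Fin (∑ c, C.n c) → S3 K, (∀ a, (f a).IsHomogeneous N) ∧ (∀ a, (g a).IsHomogeneous N') ∧
      (Matrix.of fun a b => T.Lam (f a * g b)).det ≠ 0 := by
  classical
  have e : Fin (∑ c, C.n c) ≃ (Σ c, Fin (C.n c)) := 
    (Fintype.equivFinOfCardEq (by simp)).symm
  choose f hf1 hf2 using fun a => C.surj N hN (Pi.single (e a) 1)
  choose g hg1 hg2 using fun a => C.surj N' hN' (Pi.single (e a) 1)
  refine ⟨f, g, hf1, hg1, ?_⟩
  intro hdet
  obtain ⟨x, hx0, hx⟩ := Matrix.exists_vecMul_eq_zero_iff.2 hdet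
  apply hx0
  set F := ∑ a, x a • f a with hF
  have h1 : ∀ b, T.Lam (F * g b) = 0 := by
    intro b
    have := congrFun hx b
    simp only [Matrix.vecMul, dotProduct, Matrix.of_apply, Pi.zero_apply] at this
    rw [hF, Finset.sum_mul, map_sum, ← this]
    refine Finset.sum_congr rfl fun a _ => ?_
    rw [smul_mul_assoc, map_smul, smul_eq_mul]
  have h2 : F ∈ C.I := by
    apply T.H2
    intro h
    have h3 : h - ∑ b, C.Psi h (e b) • g b ∈ C.I := by
      rw [← C.Psi_eq_zero, map_sub, map_sum, sub_eq_zero]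
      ext z
      simp only [map_smul, hg2, Finset.sum_apply, Pi.smul_apply, smul_eq_mul]
      rw [Finset.sum_eq_single (e.symm z)]
      · simp
      · intro b _ hb
        rw [Pi.single_eq_of_ne, mul_zero]
        rintro rfl; simp at hb
      · simp
    have h4 := T.H1 _ (C.I.mul_mem_left F h3)
    rw [mul_sub, map_sub, Finset.mul_sum, map_sum, sub_eq_zero] at h4
    rw [h4]
    refine Finset.sum_eq_zero fun b _ => ?_
    rw [mul_smul_comm, map_smul, h1, smul_zero]
  rw [← C.Psi_eq_zero, hF, map_sum] at h2
  ext a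
  have h3 := congrFun h2 (e a)
  simp only [map_smul, hf2, Finset.sum_apply, Pi.smul_apply, smul_eq_mul] at h3
  rw [Finset.sum_eq_single a] at h3
  · simpa using h3
  · intro b _ hb
    rw [Pi.single_eq_of_ne, mul_zero]
    intro h; exact hb (e.injective h.symm)
  · simp

end S11

namespace S11

theorem hom1_lf {K : Type} [Field K] {σ : Type} [Fintype σ] [DecidableEq σ] {f : MvPolynomial σ K}
    (hf : f.IsHomogeneous 1) : ∃ φ : (σ → K) →ₗ[K] K, f = lf φ := by
  have h : f ∈ MvPolynomial.homogeneousSubmodule σ K 1 := hf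
  rw [MvPolynomial.homogeneousSubmodule_one_eq_span_X] at h
  clear hf
  induction h using Submodule.span_induction with
  | mem x hx =>
    obtain ⟨i, rfl⟩ := hx
    refine ⟨LinearMap.proj i, ?_⟩
    simp [lf, Pi.single_apply]
  | zero => exact ⟨0, by simp [lf]⟩
  | add x y _ _ hx hy =>
    obtain ⟨a, rfl⟩ := hx
    obtain ⟨b, rfl⟩ := hy
    exact ⟨a + b, by simp [lf, add_mul, Finset.sum_add_distrib]⟩
  | smul c x _ hx =>
    obtain ⟨a, rfl⟩ := hx
    exact ⟨c • a, by simp [lf, Finset.smul_sum, MvPolynomial.smul_eq_C_mul, mul_assoc]⟩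

abbrev v0 (K : Type) [Field K] : Fin 3 → K := ![1,0,0]
abbrev v1 (K : Type) [Field K] : Fin 3 → K := ![0,1,0]
abbrev v2 (K : Type) [Field K] : Fin 3 → K := ![0,0,1]

theorem res_swap {K : Type} [Field K] [Infinite K] {σ : Type} {f : MvPolynomial σ K} {n : ℕ}
    (hf : f.IsHomogeneous n) (p q : σ → K) (h : res K p q f = 0) : res K q p f = 0 := by
  have : Polynomial.X * res K q p f = 0 := by
    apply Polynomial.funext
    intro t
    rw [Polynomial.eval_mul, Polynomial.eval_X, eval_res]
    by_cases ht : t = 0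
    · simp [ht]
    · have e : q + t • p = t • (p + t⁻¹ • q) := by
        rw [smul_add, smul_smul, mul_inv_cancel₀ ht, one_smul, add_comm]
      rw [e, eval_smul' hf, ← eval_res, h]; simp
  exact (mul_eq_zero.1 this).resolve_left Polynomial.X_ne_zero

theorem res_natDegree_le {K : Type} [Field K] {σ : Type} {f : MvPolynomial σ K} {n : ℕ}
    (hf : f.IsHomogeneous n) (p q : σ → K) : (res K p q f).natDegree ≤ n := by
  rw [res, MvPolynomial.aeval_def, MvPolynomial.eval₂_eq]
  refine Polynomial.natDegree_sum_le_of_forall_le _ _ fun e he => ?_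
  have h1 := hf (MvPolynomial.mem_support_iff.1 he)
  refine (Polynomial.natDegree_C_mul_le _ _).trans ((Polynomial.natDegree_prod_le _ _).trans ?_)
  rw [← h1, Finsupp.weight_apply, Finsupp.sum]
  refine Finset.sum_le_sum fun i _ => ?_
  refine (Polynomial.natDegree_pow_le).trans ?_
  simp only [Pi.one_apply, smul_eq_mul]
  refine Nat.mul_le_mul_left _ ?_
  rw [add_comm]
  exact Polynomial.natDegree_linear_le

theorem quad_lines {K : Type} [Field K] [Infinite K] {q : S3 K} (hq : q.IsHomogeneous 2) (q0 : q ≠ 0)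
    (h1 : res K (v0 K) (v1 K) q = 0) (h2 : Polynomial.X ^ 2 ∣ res K (v2 K) (v0 K) q)
    (a : Fin 3 → K) (ha : MvPolynomial.eval a q = 0) : a 1 * a 2 = 0 := by
  have h3 := res_swap hq _ _ h1
  have e1 : (Fin.cons 0 ![1,0] : Fin 3 → K) = v1 K := by ext i; fin_cases i <;> rfl
  have e2 : (Fin.cons 1 ![0,0] : Fin 3 → K) = v0 K := by ext i; fin_cases i <;> rfl
  obtain ⟨q1, hq1⟩ := dvd_of_res ![0,0] ![1,0] (by simp) hq (by rw [e1, e2]; exact h3)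
  have hq1' : q = MvPolynomial.X 2 * (-q1) := by rw [hq1]; simp
  have hqh : (-q1).IsHomogeneous 1 := quot_hom (hq1' ▸ hq) (MvPolynomial.isHomogeneous_X K 2)
    (MvPolynomial.X_ne_zero _)
  obtain ⟨φ, hφ⟩ := hom1_lf hqh
  rw [hφ] at hq1'
  have hr : res K (v2 K) (v0 K) q = Polynomial.C (φ (v2 K)) + Polynomial.C (φ (v0 K)) * Polynomial.X := by
    rw [hq1', map_mul, lf_res]; simp [res]
  rw [hr, Polynomial.X_pow_dvd_iff] at h2
  have c0 := h2 0 (by norm_num)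
  have c1 := h2 1 (by norm_num)
  simp at c0 c1
  have hx : ∀ x, φ x = x 1 * φ (v1 K) := by
    intro x
    have : x = x 0 • v0 K + x 1 • v1 K + x 2 • v2 K := by
      ext i; fin_cases i <;> simp
    conv_lhs => rw [this]
    simp only [map_add, map_smul]
    simp [c0, c1]
  have hne : φ (v1 K) ≠ 0 := by
    intro h
    apply q0
    rw [hq1']
    have : φ = 0 := LinearMap.ext fun x => by rw [hx x, h, mul_zero]; rfl
    simp [this, lf]
  rw [hq1'] at ha
  simp [lf_eval] at ha
  rw [hx] at ha
  rcases ha with ha | ha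
  · simp [ha]
  · rw [(mul_eq_zero.1 ha).resolve_right hne, zero_mul]

theorem ex_indep {K : Type} [Field K] (x : Fin 3 → K) (hx : x ≠ 0) :
    ∃ y, LinearIndependent K ![x, y] := by
  by_contra hc
  push Not at hc
  have : ∀ y, y ∈ Submodule.span K {x} := by
    intro y
    have := hc y
    rw [LinearIndependent.pair_iff' hx] at this
    push Not at this
    obtain ⟨a, ha⟩ := this
    exact Submodule.mem_span_singleton.2 ⟨a, ha⟩
  have h1 : Submodule.span K {x} = ⊤ := Submodule.eq_top_iff'.2 this
  have h2 := finrank_span_singleton (K := K) hx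
  rw [h1] at h2
  simp at h2

/-- core relation -/
def Rel {K : Type} [Field K] {A : Type} (p : A → Fin 3 → K) (κ : A →₀ K) (w d : ℕ) : Prop :=
  ∀ f : S3 K, f.IsHomogeneous d → (res K (v0 K) (v1 K) f).coeff w + (res K (v2 K) (v0 K) f).coeff (w-1)
    + κ.sum (fun a c => c * MvPolynomial.eval (p a) f) = 0

theorem core1 {K : Type} [Field K] [Infinite K] {A : Type} [DecidableEq A] (p : A → Fin 3 → K)
    (hp0 : ∀ a, p a ≠ 0) (hpp : ∀ a b, a ≠ b → LinearIndependent K ![p a, p b])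
    (O O' : A) (hO : p O = v0 K) (hO' : p O' = v2 K) (κ : A →₀ K) (w d : ℕ) (hw : 2 ≤ w)
    (hrel : Rel p κ w d) (hcard : (κ.support \ {O, O'}).card + (2 * w + 1) < 3 * d) :
    ∀ a ∈ κ.support, p a 1 * p a 2 = 0 := by
  classical
  have hOO : O' ≠ O := by
    rintro rfl
    have := congrFun (hO.symm.trans hO') 0
    simp at this
  choose v' hv' using fun a => ex_indep (p a) (hp0 a)
  set F : Finset A := κ.support ∪ {O, O'} with hF
  set v : A → Fin 3 → K := fun a => if a = O then v1 K else if a = O' then v0 K else v' a with hv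
  set n : A → ℕ := fun a => if a = O then w + 1 else if a = O' then w else 1 with hn
  let C : Curv K F :=
  { p := fun a => p a
    v := fun a => v a
    n := fun a => n a
    hn := by
      intro a; simp only [hn]; split_ifs <;> omega
    hpv := by
      intro a
      simp only [hv]
      split_ifs with h1 h2
      · rw [h1, hO, LinearIndependent.pair_iff]
        intro s t hst
        have i0 := congrFun hst 0
        have i1 := congrFun hst 1
        simp at i0 i1
        exact ⟨i0, i1⟩
      · rw [h2, hO', LinearIndependent.pair_iff]
        intro s t hst
        have i0 := congrFun hst 0
        have i1 := congrFun hst 2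
        simp at i0 i1
        exact ⟨i1, i0⟩
      · exact hv' a
    hpp := by
      intro a b hab
      exact hpp _ _ (fun h => hab (Subtype.ext h)) }
  have hsum : ∑ c, C.n c = (κ.support \ {O, O'}).card + (2 * w + 1) := by
    have h1 : ∑ c, C.n c = ∑ a ∈ F, n a := Finset.sum_coe_sort F n
    have h2 : F = (κ.support \ {O, O'}) ∪ {O, O'} := by rw [hF, Finset.sdiff_union_self_eq_union]
    rw [h1, h2, Finset.sum_union Finset.sdiff_disjoint, Finset.sum_pair hOO.symm]
    have h3 : ∑ a ∈ κ.support \ {O, O'}, n a = (κ.support \ {O, O'}).card := by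
      rw [Finset.card_eq_sum_ones]
      refine Finset.sum_congr rfl fun a ha => ?_
      simp at ha
      simp [hn, ha.2]
    rw [h3]
    simp [hn, hOO]
    omega
  let T : C.Dat :=
  { τ := fun a => κ a • Polynomial.lcoeff K 0 + (if (a : A) = O then Polynomial.lcoeff K w else 0)
        + (if (a : A) = O' then Polynomial.lcoeff K (w-1) else 0)
    α := fun a => if (a : A) = O then 1 else if (a : A) = O' then 1 else κ a
    hα := by
      intro a
      split_ifs with h1 h2
      · exact one_ne_zero
      · exact one_ne_zero
      · have := a.2
        simp only [hF, Finset.mem_union, Finset.mem_insert, Finset.mem_singleton, h1, h2, or_false] at this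
        exact Finsupp.mem_support_iff.1 this
    h1 := by
      intro a g
      by_cases h1 : (a : A) = O
      · have h2 : (a : A) ≠ O' := by rw [h1]; exact hOO.symm
        have : C.n a = w + 1 := by simp [C, hn, h1]
        rw [this]
        simp [h1, Polynomial.coeff_X_pow_mul', hOO.symm]
      · by_cases h2 : (a : A) = O'
        · have : C.n a = w := by simp [C, hn, h2, hOO]
          rw [this]
          simp only [h2, hOO, Polynomial.coeff_X_pow_mul', LinearMap.add_apply, LinearMap.smul_apply, if_true, if_false, Polynomial.lcoeff_apply, LinearMap.zero_apply, ite_true, ite_false]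
          rw [if_neg (by omega), if_neg (by omega)]; simp
        · have : C.n a = 1 := by simp [C, hn, h1, h2]
          rw [this]
          simp [h1, h2]
    h2 := by
      intro a g
      by_cases h1 : (a : A) = O
      · have h2 : (a : A) ≠ O' := by rw [h1]; exact hOO.symm
        have : C.n a - 1 = w := by simp [C, hn, h1]
        rw [this]
        have hw0 : ¬ (w ≤ 0) := by omega
        simp only [h1, hOO.symm, Polynomial.coeff_X_pow_mul', LinearMap.add_apply, LinearMap.smul_apply, if_true, if_false, Polynomial.lcoeff_apply, LinearMap.zero_apply, ite_true, ite_false, if_neg hw0]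
        simp
      · by_cases h2 : (a : A) = O'
        · have : C.n a - 1 = w - 1 := by simp [C, hn, h2, hOO]
          rw [this]
          have hw0 : ¬ (w - 1 ≤ 0) := by omega
          simp only [h2, hOO, Polynomial.coeff_X_pow_mul', LinearMap.add_apply, LinearMap.smul_apply, if_true, if_false, Polynomial.lcoeff_apply, LinearMap.zero_apply, ite_true, ite_false, if_neg hw0]
          simp
        · have : C.n a - 1 = 0 := by simp [C, hn, h1, h2]
          rw [this]
          simp [h1, h2] }
  have hLam : ∀ f : S3 K, f.IsHomogeneous d → T.Lam f = 0 := by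
    intro f hf
    rw [T.Lam_apply, ← hrel f hf]
    have h1 : ∀ a : F, T.τ a (C.r a f) = κ a * MvPolynomial.eval (p a) f +
        (if (a : A) = O then (res K (v0 K) (v1 K) f).coeff w else 0) +
        (if (a : A) = O' then (res K (v2 K) (v0 K) f).coeff (w-1) else 0) := by
      intro a
      have e0 : (C.r a f).coeff 0 = MvPolynomial.eval (p a) f := by
        rw [Polynomial.coeff_zero_eq_eval_zero, Curv.r, eval_res]; simp [C]
      simp only [T, LinearMap.add_apply, LinearMap.smul_apply, Polynomial.lcoeff_apply, e0, smul_eq_mul]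
      congr 1
      · congr 1
        split_ifs with h
        · simp [Curv.r, C, h, hv, hO]
        · rfl
      · split_ifs with h
        · simp [Curv.r, C, h, hv, hO', hOO]
        · rfl
    have hsc := Finset.sum_coe_sort F (fun a => κ a * MvPolynomial.eval (p a) f +
        (if (a : A) = O then (res K (v0 K) (v1 K) f).coeff w else 0) +
        (if (a : A) = O' then (res K (v2 K) (v0 K) f).coeff (w-1) else 0))
    simp_rw [h1]
    rw [hsc, Finset.sum_add_distrib, Finset.sum_add_distrib, Finset.sum_ite_eq', Finset.sum_ite_eq',
      if_pos (by simp [hF]), if_pos (by simp [hF])]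
    rw [Finsupp.sum_of_support_subset κ (s := F) (by rw [hF]; exact Finset.subset_union_left) _ (by simp)]
    ring
  obtain ⟨q, hqI, hqh, hq0⟩ := conic T.conicData hLam (by rw [hsum]; exact hcard)
  have hOF : O ∈ F := by simp [hF]
  have hO'F : O' ∈ F := by simp [hF]
  have d1 := hqI ⟨O, hOF⟩
  have d2 := hqI ⟨O', hO'F⟩
  have e1 : C.r ⟨O, hOF⟩ = res K (v0 K) (v1 K) := by simp [Curv.r, C, hv, hO]
  have e2 : C.r ⟨O', hO'F⟩ = res K (v2 K) (v0 K) := by simp [Curv.r, C, hv, hO', hOO]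
  have n1 : C.n ⟨O, hOF⟩ = w + 1 := by simp [C, hn]
  have n2 : C.n ⟨O', hO'F⟩ = w := by simp [C, hn, hOO]
  rw [e1, n1] at d1
  rw [e2, n2] at d2
  have z1 : res K (v0 K) (v1 K) q = 0 := by
    have hdeg : (res K (v0 K) (v1 K) q).natDegree ≤ 2 := by
      exact res_natDegree_le hqh _ _
    by_contra hne
    have := Polynomial.natDegree_le_of_dvd d1 hne
    simp at this
    omega
  intro a ha
  have haF : a ∈ F := by simp only [hF, Finset.mem_union]; left; exact ha
  have d3 := (pow_dvd_pow Polynomial.X (C.hn ⟨a, haF⟩)).trans (hqI ⟨a, haF⟩)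
  rw [pow_one, Polynomial.X_dvd_iff, Polynomial.coeff_zero_eq_eval_zero, Curv.r, eval_res] at d3
  refine quad_lines hqh hq0 z1 ((pow_dvd_pow _ hw).trans d2) (p a) ?_
  simpa [C] using d3
end S11

namespace S11

theorem core2D {K : Type} [Field K] {A : Type} [DecidableEq A] (p : A → Fin 3 → K)
    (κ : A →₀ K) (w d : ℕ) (hw : 2 ≤ w) (hwd : w ≤ d) (hrel : Rel p κ w d) (B : Finset A)
    (hB : ∀ a ∈ κ.support, p a 1 ≠ 0 → a ∈ B) (hB2 : ∀ a ∈ B, p a 1 ≠ 0) : d + 1 - w ≤ B.card := by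
  classical
  by_contra hc
  set g : S3 K := MvPolynomial.X 1 ^ w *
    (∏ a ∈ B, (MvPolynomial.C (p a 1) * MvPolynomial.X 0 - MvPolynomial.C (p a 0) * MvPolynomial.X 1))
    * MvPolynomial.X 0 ^ (d - w - B.card) with hg
  have hgh : g.IsHomogeneous d := by
    have h1 := MvPolynomial.IsHomogeneous.prod B (fun a => (MvPolynomial.C (p a 1) * MvPolynomial.X 0 - MvPolynomial.C (p a 0) * MvPolynomial.X 1 : S3 K)) (fun _ => 1)
      (fun a _ => ((MvPolynomial.isHomogeneous_X K 0).C_mul _).sub ((MvPolynomial.isHomogeneous_X K 1).C_mul _))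
    have h2 := (((MvPolynomial.isHomogeneous_X K (1 : Fin 3)).pow w).mul h1).mul
      ((MvPolynomial.isHomogeneous_X K (0 : Fin 3)).pow (d - w - B.card))
    convert h2 using 1
    simp; omega
  have h := hrel g hgh
  have c1 : (res K (v0 K) (v1 K) g).coeff w = ∏ a ∈ B, p a 1 := by
    have : res K (v0 K) (v1 K) g = Polynomial.X ^ w * ∏ a ∈ B, (Polynomial.C (p a 1) - Polynomial.C (p a 0) * Polynomial.X) := by
      rw [hg]; simp [res]
    rw [this]
    have := Polynomial.coeff_X_pow_mul (∏ a ∈ B, (Polynomial.C (p a 1) - Polynomial.C (p a 0) * Polynomial.X)) w 0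
    rw [zero_add] at this
    rw [this, Polynomial.coeff_zero_eq_eval_zero, Polynomial.eval_prod]
    simp
  have c2 : res K (v2 K) (v0 K) g = 0 := by
    rw [hg]
    have : w ≠ 0 := by omega
    simp [res, this]
  have c3 : κ.sum (fun a c => c * MvPolynomial.eval (p a) g) = 0 := by
    refine Finset.sum_eq_zero fun a ha => ?_
    have : MvPolynomial.eval (p a) g = 0 := by
      by_cases h1 : p a 1 = 0
      · rw [hg]; simp [h1]; left; left; omega
      · have h2 := hB a ha h1
        rw [hg, map_mul, map_mul, map_prod, Finset.prod_eq_zero h2]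
        · simp
        · simp [mul_comm]
    simp [this]
  rw [c1, c2, c3] at h
  simp at h
  exact (Finset.prod_ne_zero_iff.2 hB2) h

theorem core2R {K : Type} [Field K] {A : Type} [DecidableEq A] (p : A → Fin 3 → K) (O' : A)
    (hO' : p O' = v2 K)
    (κ : A →₀ K) (w d : ℕ) (hw : 2 ≤ w) (hwd : w ≤ d) (hrel : Rel p κ w d) (B : Finset A)
    (hB : ∀ a ∈ κ.support, p a 2 ≠ 0 → a ≠ O' → a ∈ B) (hB2 : ∀ a ∈ B, p a 0 ≠ 0) : d + 1 - w ≤ B.card := by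
  classical
  by_contra hc
  set g : S3 K := MvPolynomial.X 2 ^ (d - w + 1 - B.card) *
    (∏ a ∈ B, (MvPolynomial.C (p a 0) * MvPolynomial.X 2 - MvPolynomial.C (p a 2) * MvPolynomial.X 0))
    * MvPolynomial.X 0 ^ (w - 1) with hg
  have hgh : g.IsHomogeneous d := by
    have h1 := MvPolynomial.IsHomogeneous.prod B (fun a => (MvPolynomial.C (p a 0) * MvPolynomial.X 2 - MvPolynomial.C (p a 2) * MvPolynomial.X 0 : S3 K)) (fun _ => 1)
      (fun a _ => ((MvPolynomial.isHomogeneous_X K 2).C_mul _).sub ((MvPolynomial.isHomogeneous_X K 0).C_mul _))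
    have h2 := (((MvPolynomial.isHomogeneous_X K (2 : Fin 3)).pow (d - w + 1 - B.card)).mul h1).mul
      ((MvPolynomial.isHomogeneous_X K (0 : Fin 3)).pow (w-1))
    convert h2 using 1
    simp; omega
  have h := hrel g hgh
  have c1 : (res K (v2 K) (v0 K) g).coeff (w-1) = ∏ a ∈ B, p a 0 := by
    have : res K (v2 K) (v0 K) g = Polynomial.X ^ (w-1) * ∏ a ∈ B, (Polynomial.C (p a 0) - Polynomial.C (p a 2) * Polynomial.X) := by
      rw [hg, mul_comm]; simp [res]
    rw [this]
    have := Polynomial.coeff_X_pow_mul (∏ a ∈ B, (Polynomial.C (p a 0) - Polynomial.C (p a 2) * Polynomial.X)) (w-1) 0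
    rw [zero_add] at this
    rw [this, Polynomial.coeff_zero_eq_eval_zero, Polynomial.eval_prod]
    simp
  have hne : d - w + 1 - B.card ≠ 0 := by omega
  have c2 : res K (v0 K) (v1 K) g = 0 := by
    rw [hg]
    simp [res, hne]
  have c3 : κ.sum (fun a c => c * MvPolynomial.eval (p a) g) = 0 := by
    refine Finset.sum_eq_zero fun a ha => ?_
    have : MvPolynomial.eval (p a) g = 0 := by
      by_cases h1 : p a 2 = 0
      · rw [hg]; simp [h1, hne]
      · by_cases h3 : a = O'
        · rw [hg, h3, hO']
          have : w - 1 ≠ 0 := by omega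
          simp [this]
        · have h2 := hB a ha h1 h3
          rw [hg, map_mul, map_mul, map_prod, Finset.prod_eq_zero h2]
          · simp
          · simp [mul_comm]
    simp [this]
  rw [c1, c2, c3] at h
  simp at h
  exact (Finset.prod_ne_zero_iff.2 hB2) h

theorem rank_lower3 {K : Type} [Field K] [Infinite K] (w d k : ℕ) (hw : 2 ≤ w)
    (hd : 4 * w + 2 * k + 1 ≤ d) (e : Fin k → Fin 3 → K) (he1 : ∀ i, e i 1 ≠ 0) (he2 : ∀ i, e i 2 ≠ 0)
    (hee : ∀ i j, i ≠ j → LinearIndependent K ![e i, e j])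
    {J : Type} [Fintype J] (β : J → K) (x : J → Fin 3 → K)
    (hrel : ∀ f : S3 K, f.IsHomogeneous d → (res K (v0 K) (v1 K) f).coeff w + (res K (v2 K) (v0 K) f).coeff (w-1)
      + MvPolynomial.eval (v0 K) f + ∑ i, MvPolynomial.eval (e i) f = ∑ j, β j * MvPolynomial.eval (x j) f) :
    2 * (d + 1 - w) + k ≤ Fintype.card J := by
  classical
  by_contra hcon
  have hv0 : v0 K ≠ 0 := fun h => by simpa using congrFun h 0
  have hv2 : v2 K ≠ 0 := fun h => by simpa using congrFun h 2
  let A := ℙ K (Fin 3 → K)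
  let O : A := Projectivization.mk K (v0 K) hv0
  let O' : A := Projectivization.mk K (v2 K) hv2
  have hOO : O' ≠ O := by
    intro h
    rw [Projectivization.mk_eq_mk_iff'] at h
    obtain ⟨a, ha⟩ := h
    simpa using congrFun ha 2
  let p : A → Fin 3 → K := fun a => if a = O then v0 K else if a = O' then v2 K else a.rep
  have hpO : p O = v0 K := by simp [p]
  have hpO' : p O' = v2 K := by simp [p, hOO]
  have hp0 : ∀ a, p a ≠ 0 := by
    intro a; simp only [p]; split_ifs
    · exact hv0
    · exact hv2
    · exact a.rep_nonzero
  have hmk : ∀ a, Projectivization.mk K (p a) (hp0 a) = a := by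
    intro a
    by_cases h1 : a = O
    · subst h1; simp only [hpO]; rfl
    · by_cases h2 : a = O'
      · subst h2; simp only [hpO']; rfl
      · have : p a = a.rep := by simp [p, h1, h2]
        simp only [this]; exact a.mk_rep
  have hpp : ∀ a b, a ≠ b → LinearIndependent K ![p a, p b] := by
    intro a b hab
    rw [LinearIndependent.pair_iff' (hp0 a)]
    intro c hc
    apply hab
    rw [← hmk a, ← hmk b, eq_comm, Projectivization.mk_eq_mk_iff']
    exact ⟨c, hc⟩
  have hmk2 : ∀ y : Fin 3 → K, ∀ hy : y ≠ 0, ∃ c : K, c ≠ 0 ∧ y = c • p (Projectivization.mk K y hy) := by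
    intro y hy
    have := hmk (Projectivization.mk K y hy)
    rw [eq_comm, Projectivization.mk_eq_mk_iff'] at this
    obtain ⟨c, hc⟩ := this
    refine ⟨c, ?_, hc.symm⟩
    rintro rfl
    apply hy; rw [← hc, zero_smul]
  have hq : ∀ j, ∃ (q : A) (b : K), ∀ f : S3 K, f.IsHomogeneous d →
      β j * MvPolynomial.eval (x j) f = b * MvPolynomial.eval (p q) f := by
    intro j
    by_cases hx : x j = 0
    · refine ⟨O, 0, fun f hf => ?_⟩
      have : MvPolynomial.eval ((0 : K) • (0 : Fin 3 → K)) f = 0 := by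
        rw [eval_smul' hf, zero_pow (by omega), zero_mul]
      rw [zero_smul] at this
      rw [hx, this]; simp
    · obtain ⟨c, _, hc⟩ := hmk2 _ hx
      refine ⟨Projectivization.mk K _ hx, β j * c ^ d, fun f hf => ?_⟩
      rw [mul_assoc, ← eval_smul' hf, ← hc]
  choose q b hqb using hq
  have he0 : ∀ i, e i ≠ 0 := fun i h => he1 i (by rw [h]; rfl)
  choose c hc0 hc using fun i => hmk2 (e i) (he0 i)
  set E : Fin k → A := fun i => Projectivization.mk K (e i) (he0 i) with hE
  have hEinj : Function.Injective E := by
    intro i j hij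
    by_contra hne
    have h1 := hee i j hne
    rw [LinearIndependent.pair_iff' (he0 i)] at h1
    obtain ⟨a, ha⟩ := (Projectivization.mk_eq_mk_iff' K _ _ (he0 i) (he0 j)).1 hij
    have ha0 : a ≠ 0 := by rintro rfl; exact he0 i (by rw [← ha, zero_smul])
    exact h1 a⁻¹ (by rw [← ha, smul_smul, inv_mul_cancel₀ ha0, one_smul])
  have hE1 : ∀ i, p (E i) 1 ≠ 0 := by
    intro i h
    apply he1 i
    rw [hc i]; simp only [Pi.smul_apply, hE] at h ⊢
    rw [h, smul_zero]
  have hE2 : ∀ i, p (E i) 2 ≠ 0 := by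
    intro i h
    apply he2 i
    rw [hc i]; simp only [Pi.smul_apply, hE] at h ⊢
    rw [h, smul_zero]
  set βF : A →₀ K := ∑ j, Finsupp.single (q j) (b j) with hβF
  set εF : A →₀ K := ∑ i, Finsupp.single (E i) (c i ^ d) with hεF
  set κ : A →₀ K := Finsupp.single O 1 + εF - βF with hκ
  have hRel : Rel p κ w d := by
    intro f hf
    have h1 : κ.sum (fun a c => c * MvPolynomial.eval (p a) f) =
      Finsupp.linearCombination K (fun a => MvPolynomial.eval (p a) f) κ := by
      rw [Finsupp.linearCombination_apply]; rfl
    rw [h1, hκ, map_sub, map_add, hεF, hβF, map_sum, map_sum]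
    simp only [Finsupp.linearCombination_single, smul_eq_mul, hpO, one_mul]
    have h2 := hrel f hf
    rw [Finset.sum_congr rfl (fun j _ => hqb j f hf)] at h2
    have h3 : ∀ i, c i ^ d * MvPolynomial.eval (p (E i)) f = MvPolynomial.eval (e i) f := by
      intro i
      rw [← eval_smul' hf, hE, ← hc i]
    simp only [h3]
    linear_combination h2
  have hβs : ∀ a, βF a ≠ 0 → a ∈ Finset.univ.image q := by
    intro a ha
    by_contra hn
    apply ha
    rw [hβF, Finsupp.finsetSum_apply]
    refine Finset.sum_eq_zero fun j _ => ?_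
    rw [Finsupp.single_eq_of_ne]
    rintro rfl
    exact hn (Finset.mem_image_of_mem _ (Finset.mem_univ _))
  have hεs : ∀ a, εF a ≠ 0 → a ∈ Finset.univ.image E := by
    intro a ha
    by_contra hn
    apply ha
    rw [hεF, Finsupp.finsetSum_apply]
    refine Finset.sum_eq_zero fun j _ => ?_
    rw [Finsupp.single_eq_of_ne]
    rintro rfl
    exact hn (Finset.mem_image_of_mem _ (Finset.mem_univ _))
  have hεE : ∀ i, εF (E i) = c i ^ d := by
    intro i
    rw [hεF, Finsupp.finsetSum_apply, Finset.sum_eq_single i]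
    · simp
    · intro j _ hj
      rw [Finsupp.single_eq_of_ne]
      exact fun h => hj (hEinj h).symm
    · simp
  have hκO : ∀ a, a ≠ O → κ a = εF a - βF a := by
    intro a ha
    rw [hκ, Finsupp.sub_apply, Finsupp.add_apply, Finsupp.single_eq_of_ne ha, zero_add]
  have hsub : κ.support \ {O, O'} ⊆ Finset.univ.image E ∪ Finset.univ.image q := by
    intro a ha
    simp only [Finset.mem_sdiff, Finset.mem_insert, Finset.mem_singleton, not_or, Finsupp.mem_support_iff] at ha
    obtain ⟨h1, h2, _⟩ := ha
    rw [hκO a h2] at h1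
    rw [Finset.mem_union]
    by_cases h3 : εF a = 0
    · right; apply hβs; intro h4; apply h1; rw [h3, h4, sub_zero]
    · left; exact hεs a h3
  have hEc : (Finset.univ.image E).card = k := by
    rw [Finset.card_image_of_injective _ hEinj]; simp
  have hqc : (Finset.univ.image q).card ≤ Fintype.card J := Finset.card_image_le
  have hcard : (κ.support \ {O, O'}).card + (2 * w + 1) < 3 * d := by
    have := (Finset.card_le_card hsub).trans (Finset.card_union_le _ _)
    omega
  have hprod := core1 p hp0 hpp O O' hpO hpO' κ w d hw hRel hcard
  set BD := κ.support.filter (fun a => p a 1 ≠ 0) with hBD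
  set BR := κ.support.filter (fun a => p a 2 ≠ 0 ∧ a ≠ O') with hBR
  have h1 : d + 1 - w ≤ BD.card := by
    refine core2D p κ w d hw (by omega) hRel BD ?_ ?_
    · intro a h1 h2; exact Finset.mem_filter.2 ⟨h1, h2⟩
    · intro a h1; exact (Finset.mem_filter.1 h1).2
  have h2 : d + 1 - w ≤ BR.card := by
    refine core2R p O' hpO' κ w d hw (by omega) hRel BR ?_ ?_
    · intro a h1 h2 h3; exact Finset.mem_filter.2 ⟨h1, h2, h3⟩
    · intro a h1 h4
      obtain ⟨h1, h2, h3⟩ := Finset.mem_filter.1 h1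
      have h5 := (mul_eq_zero.1 (hprod a h1)).resolve_right h2
      have h6 := hpp O' a (Ne.symm h3)
      rw [LinearIndependent.pair_iff' (hp0 _)] at h6
      apply h6 (p a 2)
      rw [hpO']
      ext i; fin_cases i <;> simp [h4, h5]
  have hEκ : ∀ i, κ (E i) = 0 := by
    intro i
    by_contra h
    have := hprod (E i) (Finsupp.mem_support_iff.2 h)
    exact mul_ne_zero (hE1 i) (hE2 i) this
  have hEO : ∀ i, E i ≠ O := by
    intro i h
    apply hE1 i; rw [h, hpO]; rfl
  have hin : ∀ a, a ≠ O → κ a ≠ 0 → a ∈ Finset.univ.image q := by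
    intro a ha hk
    apply hβs
    intro h
    rw [hκO a ha, h, sub_zero] at hk
    obtain ⟨i, _, rfl⟩ := Finset.mem_image.1 (hεs a hk)
    have := hEκ i
    rw [hκO _ ha, h, sub_zero] at this
    exact hk this
  have hall : (BD ∪ BR) ∪ Finset.univ.image E ⊆ Finset.univ.image q := by
    intro a ha
    rw [Finset.mem_union, Finset.mem_union] at ha
    rcases ha with (ha | ha) | ha
    · obtain ⟨h3, h4⟩ := Finset.mem_filter.1 ha
      refine hin a ?_ (Finsupp.mem_support_iff.1 h3)
      rintro rfl; apply h4; rw [hpO]; rfl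
    · obtain ⟨h3, h4, _⟩ := Finset.mem_filter.1 ha
      refine hin a ?_ (Finsupp.mem_support_iff.1 h3)
      rintro rfl; apply h4; rw [hpO]; rfl
    · obtain ⟨i, _, rfl⟩ := Finset.mem_image.1 ha
      apply hβs
      intro h
      have := hEκ i
      rw [hκO _ (hEO i), h, sub_zero, hεE] at this
      exact pow_ne_zero _ (hc0 i) this
  have hd1 : Disjoint BD BR := by
    rw [Finset.disjoint_left]
    intro a ha hb
    obtain ⟨h3, h4⟩ := Finset.mem_filter.1 ha
    obtain ⟨_, h5, _⟩ := Finset.mem_filter.1 hb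
    exact mul_ne_zero h4 h5 (hprod a h3)
  have hd2 : Disjoint (BD ∪ BR) (Finset.univ.image E) := by
    rw [Finset.disjoint_left]
    intro a ha hb
    obtain ⟨i, _, rfl⟩ := Finset.mem_image.1 hb
    have : κ (E i) ≠ 0 := by
      rw [Finset.mem_union] at ha
      rcases ha with ha | ha
      · exact Finsupp.mem_support_iff.1 (Finset.mem_filter.1 ha).1
      · exact Finsupp.mem_support_iff.1 (Finset.mem_filter.1 ha).1
    exact this (hEκ i)
  have := Finset.card_le_card hall
  rw [Finset.card_union_of_disjoint hd2, Finset.card_union_of_disjoint hd1] at this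
  omega
end S11

namespace S11

theorem res_reflect {K : Type} [Field K] [Infinite K] {σ : Type} {f : MvPolynomial σ K} {n : ℕ}
    (hf : f.IsHomogeneous n) (p q : σ → K) : Polynomial.reflect n (res K p q f) = res K q p f := by
  have : Polynomial.X * Polynomial.reflect n (res K p q f) = Polynomial.X * res K q p f := by
    apply Polynomial.funext
    intro t
    rw [Polynomial.eval_mul, Polynomial.eval_mul, Polynomial.eval_X]
    by_cases ht : t = 0
    · simp [ht]
    · congr 1
      have e : q + t • p = t • (p + t⁻¹ • q) := by
        rw [smul_add, smul_smul, mul_inv_cancel₀ ht, one_smul, add_comm]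
      rw [eval_res, e, eval_smul' hf, ← eval_res]
      letI := invertibleOfNonzero (inv_ne_zero ht)
      have := Polynomial.eval₂_reflect_mul_pow (RingHom.id K) t⁻¹ n (res K p q f) (res_natDegree_le hf _ _)
      rw [Polynomial.eval₂_id, Polynomial.eval₂_id, invOf_eq_inv, inv_inv] at this
      rw [← this, mul_comm, mul_assoc, ← mul_pow, inv_mul_cancel₀ ht, one_pow, mul_one]
  exact mul_left_cancel₀ Polynomial.X_ne_zero this

theorem res_coeff_top {K : Type} [Field K] [Infinite K] {σ : Type} {f : MvPolynomial σ K} {n : ℕ}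
    (hf : f.IsHomogeneous n) (p q : σ → K) : (res K p q f).coeff n = MvPolynomial.eval q f := by
  have h := res_reflect hf p q
  have h2 := congrArg (fun P => Polynomial.coeff P 0) h
  simp only [Polynomial.coeff_reflect, Polynomial.revAt_zero] at h2
  rw [h2, Polynomial.coeff_zero_eq_eval_zero, eval_res]; simp

theorem res_coeff_zero {K : Type} [Field K] {σ : Type} (f : MvPolynomial σ K) 
    (p q : σ → K) : (res K p q f).coeff 0 = MvPolynomial.eval p f := by
  rw [Polynomial.coeff_zero_eq_eval_zero, eval_res]; simp

theorem eval_span_zero {K : Type} [Field K] [Infinite K] {σ : Type} {f : MvPolynomial σ K} {n : ℕ}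
    (hf : f.IsHomogeneous n) (p q x : σ → K) (h : res K p q f = 0) (hx : x ∈ Submodule.span K {p, q}) :
    MvPolynomial.eval x f = 0 := by
  obtain ⟨a, b, rfl⟩ := Submodule.mem_span_pair.1 hx
  by_cases ha : a = 0
  · rw [ha, zero_smul, zero_add, eval_smul' hf, ← res_coeff_top hf p q, h]; simp
  · have : a • p + b • q = a • (p + (a⁻¹ * b) • q) := by
      rw [smul_add, smul_smul, ← mul_assoc, mul_inv_cancel₀ ha, one_mul]
    rw [this, eval_smul' hf, ← eval_res, h]; simp

/-- form with given restriction -/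
noncomputable def fm {K : Type} [Field K] {σ : Type} [Fintype σ] [DecidableEq σ]
    (L0 L1 : (σ → K) →ₗ[K] K) (n : ℕ) (u : Polynomial K) : MvPolynomial σ K :=
  ∑ j ∈ Finset.range (n+1), MvPolynomial.C (u.coeff j) * (lf L1 ^ j * lf L0 ^ (n - j))

theorem fm_hom {K : Type} [Field K] {σ : Type} [Fintype σ] [DecidableEq σ]
    (L0 L1 : (σ → K) →ₗ[K] K) (n : ℕ) (u : Polynomial K) : (fm L0 L1 n u).IsHomogeneous n := by
  refine MvPolynomial.IsHomogeneous.sum _ _ _ fun j hj => ?_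
  have h := (((lf_hom L1).pow j).mul ((lf_hom L0).pow (n - j))).C_mul (u.coeff j)
  convert h using 1
  have := Finset.mem_range.1 hj
  omega

theorem fm_res {K : Type} [Field K] {σ : Type} [Fintype σ] [DecidableEq σ]
    (L0 L1 : (σ → K) →ₗ[K] K) (n : ℕ) (u : Polynomial K) (hu : u.natDegree ≤ n) (p q : σ → K)
    (h0 : L0 p = 1) (h0' : L0 q = 0) (h1 : L1 p = 0) (h1' : L1 q = 1) : res K p q (fm L0 L1 n u) = u := by
  conv_rhs => rw [Polynomial.as_sum_range_C_mul_X_pow' u (Nat.lt_succ_of_le hu)]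
  rw [fm, map_sum]
  refine Finset.sum_congr rfl fun j _ => ?_
  rw [map_mul, map_mul, map_pow, map_pow, lf_res, lf_res, h0, h0', h1, h1']
  simp [res]

theorem homog_of_res {K : Type} [Field K] [Infinite K] {m : ℕ} (I : Ideal (PR K m)) (hI : IsHomogI I)
    (o y : Fin (m+1) → K) (L0 L1 : (Fin (m+1) → K) →ₗ[K] K)
    (h0 : L0 o = 1) (h0' : L0 y = 0) (h1 : L1 o = 0) (h1' : L1 y = 1) (g : PR K m) (hg : g ∈ I) :
    ∃ M, ∃ g1 ∈ I, g1.IsHomogeneous M ∧ res K o y g1 = res K o y g := by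
  refine ⟨g.totalDegree, ∑ n ∈ Finset.range (g.totalDegree + 1),
    lf L0 ^ (g.totalDegree - n) * MvPolynomial.homogeneousComponent n g, ?_, ?_, ?_⟩
  · exact Ideal.sum_mem _ fun n _ => Ideal.mul_mem_left _ _ (hI g hg n)
  · refine MvPolynomial.IsHomogeneous.sum _ _ _ fun j hj => ?_
    have h := ((lf_hom L0).pow (g.totalDegree - j)).mul (MvPolynomial.homogeneousComponent_isHomogeneous j g)
    convert h using 1
    have := Finset.mem_range.1 hj
    omega
  · conv_rhs => rw [← MvPolynomial.sum_homogeneousComponent g]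
    rw [map_sum, map_sum]
    refine Finset.sum_congr rfl fun n _ => ?_
    rw [map_mul, map_pow, lf_res, h0, h0']; simp

theorem van_iff {K : Type} [Field K] {m : ℕ} (I : Ideal (PR K m)) (hI : IsHomogI I)
    (v : Fin (m+1) → K) (hv : v ≠ 0) (h : ∀ f ∈ I, MvPolynomial.eval v f = 0) :
    Projectivization.mk K v hv ∈ pzeroLocus I := by
  intro f hf n
  obtain ⟨c, hc⟩ := Projectivization.exists_smul_eq_mk_rep K v hv
  rw [← hc]
  have := eval_smul' (MvPolynomial.homogeneousComponent_isHomogeneous n f) (c : K) v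
  rw [h _ (hI f hf n), mul_zero] at this
  exact this

theorem order_ge {K : Type} [Field K] [IsAlgClosed K] {m : ℕ} (I : Ideal (PR K m)) (hI : IsHomogI I)
    (o y : Fin (m+1) → K) (hoy : LinearIndependent K ![o, y]) (ho : o ≠ 0)
    (hW : idealOfSet {a : Pm K m | a.submodule ≤ Submodule.span K {o, y}} ≤ I)
    (hsup : pzeroLocus I ⊆ {Projectivization.mk K o ho}) :
    ∀ f ∈ I, Polynomial.X ^ idealDeg I ∣ res K o y f := by
  classical
  obtain ⟨L0, h0, h0'⟩ := ex_dual2 hoy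
  obtain ⟨L1, h1', h1⟩ := ex_dual2 (LinearIndependent.pair_symm_iff.1 hoy)
  have hy : y ≠ 0 := hoy.ne_zero 1
  have hsurj : Function.Surjective (res K o y) := by
    intro u
    exact ⟨fm L0 L1 u.natDegree u, fm_res L0 L1 _ u le_rfl o y h0 h0' h1 h1'⟩
  -- a form not vanishing at y
  obtain ⟨N, g, hgI, hgh, hN, hgy⟩ : ∃ N, ∃ g ∈ I, g.IsHomogeneous N ∧ N ≠ 0 ∧ MvPolynomial.eval y g ≠ 0 := by
    by_contra hcon
    push Not at hcon
    have : Projectivization.mk K y hy ∈ pzeroLocus I := by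
      refine van_iff I hI y hy fun f hf => ?_
      rw [← MvPolynomial.sum_homogeneousComponent f, map_sum]
      refine Finset.sum_eq_zero fun n _ => ?_
      have := hcon (1 + n) (lf L1 * MvPolynomial.homogeneousComponent n f) (Ideal.mul_mem_left _ _ (hI f hf n))
        ((lf_hom L1).mul (MvPolynomial.homogeneousComponent_isHomogeneous n f)) (by omega)
      rw [map_mul, lf_eval, h1', one_mul] at this
      exact this
    have h3 := hsup this
    rw [Set.mem_singleton_iff, Projectivization.mk_eq_mk_iff'] at h3
    obtain ⟨a, ha⟩ := h3
    exact (LinearIndependent.pair_iff' ho).1 hoy a ha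
  obtain ⟨G, hG⟩ := IsPrincipalIdealRing.principal (Ideal.map (res K o y) I)
  have hG2 : Ideal.map (res K o y) I = Ideal.span {G} := hG
  have hdvd : ∀ f ∈ I, G ∣ res K o y f := by
    intro f hf
    rw [← Ideal.mem_span_singleton, ← hG2]
    exact Ideal.mem_map_of_mem _ hf
  have hGdeg : (res K o y g).natDegree = N := by
    apply le_antisymm (res_natDegree_le hgh _ _)
    apply Polynomial.le_natDegree_of_ne_zero
    rw [res_coeff_top hgh]; exact hgy
  have hG0 : G ≠ 0 := by
    rintro rfl
    have := zero_dvd_iff.1 (hdvd g hgI)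
    rw [this] at hGdeg
    simp at hGdeg
    exact hN hGdeg.symm
  obtain ⟨Q, hQ, hQd⟩ := Polynomial.exists_eq_pow_rootMultiplicity_mul_and_not_dvd G hG0 0
  set a := Polynomial.rootMultiplicity 0 G
  rw [map_zero, sub_zero] at hQ hQd
  have hQroot : ∀ t, ¬ Q.IsRoot t := by
    intro t ht
    by_cases t0 : t = 0
    · subst t0
      apply hQd
      have := Polynomial.dvd_iff_isRoot.2 ht
      simpa using this
    · have hv : o + t • y ≠ 0 := by
        intro h
        have := (LinearIndependent.pair_iff.1 hoy) 1 t (by rw [one_smul]; exact h)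
        exact one_ne_zero this.1
      have : Projectivization.mk K (o + t • y) hv ∈ pzeroLocus I := by
        refine van_iff I hI _ hv fun f hf => ?_
        rw [← eval_res]
        obtain ⟨u, hu⟩ := hdvd f hf
        rw [hu, hQ, Polynomial.eval_mul, Polynomial.eval_mul, ht.eq_zero]; simp
      have h3 := hsup this
      rw [Set.mem_singleton_iff, Projectivization.mk_eq_mk_iff'] at h3
      obtain ⟨b, hb⟩ := h3
      have := (LinearIndependent.pair_iff.1 hoy) (1 - b) t (by rw [sub_smul, hb, one_smul]; abel)
      exact t0 this.2
  have hQu : IsUnit Q := by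
    rw [Polynomial.isUnit_iff_degree_eq_zero]
    by_contra hne
    obtain ⟨t, ht⟩ := IsAlgClosed.exists_root Q hne
    exact hQroot t ht
  have hXa : ∀ f ∈ I, Polynomial.X ^ a ∣ res K o y f := by
    intro f hf
    exact (Dvd.intro Q hQ.symm).trans (hdvd f hf)
  suffices h : idealDeg I ≤ a from fun f hf => (pow_dvd_pow _ h).trans (hXa f hf)
  obtain ⟨g0, hg0, hg0r⟩ : ∃ g0 ∈ I, res K o y g0 = Polynomial.X ^ a := by
    rw [← Ideal.mem_map_iff_of_surjective _ hsurj, hG2, Ideal.mem_span_singleton]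
    obtain ⟨u, hu⟩ := hQu
    exact ⟨↑u⁻¹, by rw [hQ, mul_assoc, ← hu, Units.mul_inv, mul_one]⟩
  obtain ⟨M, g1, hg1I, hg1h, hg1r⟩ := homog_of_res I hI o y L0 L1 h0 h0' h1 h1' g0 hg0
  rw [hg0r] at hg1r
  have key : ∀ t, N + M ≤ t → ∀ f : PR K m, f.IsHomogeneous t → Polynomial.X ^ a ∣ res K o y f → f ∈ I := by
    intro t ht f hf hfa
    set P := res K o y f with hP
    set q := res K o y g with hq
    have hdm := EuclideanDomain.div_add_mod P q
    have hR := Polynomial.natDegree_mod_lt P (q := q) (by rw [hGdeg]; exact hN)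
    rw [hGdeg] at hR
    have hRa : Polynomial.X ^ a ∣ P % q := by
      rw [← EuclideanDomain.dvd_mod_iff (hXa g hgI)] at hfa
      exact hfa
    obtain ⟨u, hu⟩ := hRa
    have hud : u.natDegree ≤ t - M := by
      by_cases hu0 : u = 0
      · simp [hu0]
      · have := Polynomial.natDegree_mul (pow_ne_zero a (Polynomial.X_ne_zero (R := K))) hu0
        rw [← hu] at this
        omega
    have hQd : (P / q).natDegree ≤ t - N := by
      by_cases hq0 : P / q = 0
      · simp [hq0]
      · have hqn : q ≠ 0 := by intro h; rw [h] at hGdeg; simp at hGdeg; omega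
        have h3 := Polynomial.natDegree_mul hqn hq0
        have h4 : q * (P / q) = P - P % q := eq_sub_of_add_eq hdm
        rw [h4, hGdeg] at h3
        have h5 := Polynomial.natDegree_sub_le P (P % q)
        have h6 : P.natDegree ≤ t := res_natDegree_le hf _ _
        have : max P.natDegree (P % q).natDegree ≤ t := max_le h6 (by omega)
        omega
    set f2 := g * fm L0 L1 (t - N) (P / q) + g1 * fm L0 L1 (t - M) u with hf2
    have hf2I : f2 ∈ I := I.add_mem (I.mul_mem_right _ hgI) (I.mul_mem_right _ hg1I)
    have hf2h : f2.IsHomogeneous t := by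
      refine MvPolynomial.IsHomogeneous.add ?_ ?_
      · have := hgh.mul (fm_hom L0 L1 (t - N) (P / q))
        rwa [show N + (t - N) = t by omega] at this
      · have := hg1h.mul (fm_hom L0 L1 (t - M) u)
        rwa [show M + (t - M) = t by omega] at this
    have hf2r : res K o y (f - f2) = 0 := by
      rw [map_sub, hf2, map_add, map_mul, map_mul, fm_res L0 L1 _ _ hQd o y h0 h0' h1 h1',
        fm_res L0 L1 _ _ hud o y h0 h0' h1 h1', hg1r, ← hu, ← hq, hdm, ← hP, sub_self]
    have hmem : f - f2 ∈ I := by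
      apply hW
      apply Ideal.subset_span
      refine ⟨⟨t, hf.sub hf2h⟩, fun b hb => ?_⟩
      refine eval_span_zero (hf.sub hf2h) o y _ hf2r ?_
      apply hb
      rw [Projectivization.submodule_eq]
      exact Submodule.mem_span_singleton_self _
    have := I.add_mem hmem hf2I
    simpa using this
  refine Filter.limsup_le_of_le (by isBoundedDefault) ?_
  filter_upwards [Filter.eventually_ge_atTop (N + M)] with t ht
  -- bound the Hilbert function
  let Ψ : Hd K m t →ₗ[K] (Fin a → K) :=
    LinearMap.pi fun j => (Polynomial.lcoeff K j) ∘ₗ (res K o y).toLinearMap ∘ₗ (Hd K m t).subtype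
  let Φ : Hd K m t →ₗ[K] (PR K m ⧸ I) := (Ideal.Quotient.mkₐ K I).toLinearMap ∘ₗ (Hd K m t).subtype
  have hker : LinearMap.ker Ψ ≤ LinearMap.ker Φ := by
    intro f hf
    rw [LinearMap.mem_ker] at hf ⊢
    change Ideal.Quotient.mk I (f : PR K m) = 0
    rw [Ideal.Quotient.eq_zero_iff_mem]
    refine key t ht f f.2 ?_
    rw [Polynomial.X_pow_dvd_iff]
    intro j hj
    exact congrFun hf ⟨j, hj⟩
  have hr : hilbQ I t = Module.finrank K (LinearMap.range Φ) := by
    rw [hilbQ, LinearMap.range_comp, Submodule.range_subtype]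
  rw [hr]
  haveI : FiniteDimensional K (Hd K m t) := inferInstance
  have e1 := LinearMap.finrank_range_add_finrank_ker Φ
  have e2 := LinearMap.finrank_range_add_finrank_ker Ψ
  have e3 := Submodule.finrank_mono hker
  have e4 : Module.finrank K (LinearMap.range Ψ) ≤ a := by
    have := Submodule.finrank_le (LinearMap.range Ψ)
    simpa using this
  omega
end S11

namespace S11

theorem nu_apply {K : Type} [Field K] {m : ℕ} (d : ℕ) (v : Fin (m+1) → K) (f : Hd K m d) :
    nu d v f = MvPolynomial.eval v (f : PR K m) := by
  simp [nu, MvPolynomial.aeval_eq_eval]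

theorem nu_smul {K : Type} [Field K] {m : ℕ} (d : ℕ) (c : K) (v : Fin (m+1) → K) :
    nu d (c • v) = c ^ d • nu d v := by
  ext f
  rw [LinearMap.smul_apply, nu_apply, nu_apply, eval_smul' f.2]; rfl

theorem nu_ne {K : Type} [Field K] {m : ℕ} (d : ℕ) (v : Fin (m+1) → K) (hv : v ≠ 0) : nu d v ≠ 0 := by
  intro h
  obtain ⟨i, hi⟩ : ∃ i, v i ≠ 0 := by
    by_contra hc; push Not at hc; exact hv (funext hc)
  have h1 := LinearMap.congr_fun h ⟨MvPolynomial.X i ^ d, by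
    have := (MvPolynomial.isHomogeneous_X K i).pow d
    rwa [one_mul] at this⟩
  rw [nu_apply] at h1
  simp at h1
  exact hi h1.1

theorem mk_mem_XSet {K : Type} [Field K] {m : ℕ} (d : ℕ) (v : Fin (m+1) → K) (hv : v ≠ 0) :
    Projectivization.mk K (nu d v) (nu_ne d v hv) ∈ XSet K m d := by
  refine ⟨Projectivization.mk K v hv, ?_⟩
  obtain ⟨c, hc⟩ := Projectivization.exists_smul_eq_mk_rep K v hv
  rw [Projectivization.submodule_mk, ← hc]
  have h1 : nu d (c • v) = ((c : K) ^ d) • nu d v := nu_smul d (c : K) v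
  rw [h1, Submodule.span_singleton_smul_eq (IsUnit.mk0 _ (pow_ne_zero _ c.ne_zero))]

theorem to_fin {K : Type} [Field K] {m d : ℕ} {J : Type} [Fintype J] (c : J → K)
    (x : J → Fin (m+1) → K) (hx : ∀ j, x j ≠ 0) :
    ∃ S : Finset (PN K m d), ↑S ⊆ XSet K m d ∧ S.card ≤ Fintype.card J ∧
      ∑ j, c j • nu d (x j) ∈ Submodule.span K (Projectivization.rep '' (S : Set (PN K m d))) := by
  classical
  refine ⟨Finset.univ.image (fun j => Projectivization.mk K (nu d (x j)) (nu_ne d _ (hx j))), ?_,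
    Finset.card_image_le, ?_⟩
  · intro Q hQ
    simp only [Finset.coe_image, Finset.coe_univ, Set.image_univ, Set.mem_range] at hQ
    obtain ⟨j, rfl⟩ := hQ
    exact mk_mem_XSet d _ (hx j)
  · refine Submodule.sum_mem _ fun j _ => Submodule.smul_mem _ _ ?_
    obtain ⟨u, hu⟩ := Projectivization.exists_smul_eq_mk_rep K (nu d (x j)) (nu_ne d _ (hx j))
    have h1 : nu d (x j) = (u⁻¹ : Kˣ) • (Projectivization.mk K (nu d (x j)) (nu_ne d _ (hx j))).rep := by
      rw [← hu, inv_smul_smul]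
    rw [h1]
    refine Submodule.smul_of_tower_mem _ _ (Submodule.subset_span ⟨_, ?_, rfl⟩)
    simp

theorem of_fin {K : Type} [Field K] {m d : ℕ} (S : Finset (PN K m d)) (hS : ↑S ⊆ XSet K m d)
    (φ : Module.Dual K (Hd K m d))
    (h : φ ∈ Submodule.span K (Projectivization.rep '' (S : Set (PN K m d)))) :
    ∃ (c : S → K) (x : S → Fin (m+1) → K), φ = ∑ j, c j • nu d (x j) := by
  choose a ha using fun Q : S => hS Q.2
  have hle : Submodule.span K (Projectivization.rep '' (S : Set (PN K m d))) ≤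
      Submodule.span K (Set.range fun Q : S => nu d (a Q).rep) := by
    rw [Submodule.span_le]
    rintro _ ⟨Q, hQ, rfl⟩
    have h1 : Q.rep ∈ Q.submodule := by
      rw [Projectivization.submodule_eq]; exact Submodule.mem_span_singleton_self _
    rw [ha ⟨Q, hQ⟩] at h1
    refine Submodule.span_mono ?_ h1
    rw [Set.singleton_subset_iff]
    exact ⟨⟨Q, hQ⟩, rfl⟩
  obtain ⟨c, hc⟩ := (Submodule.mem_span_range_iff_exists_fun K).1 (hle h)
  exact ⟨c, fun Q => (a Q).rep, hc.symm⟩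

theorem srank_eq {K : Type} [Field K] {m d n : ℕ} (φ : Module.Dual K (Hd K m d)) (hφ : φ ≠ 0)
    (hlow : ∀ (J : Type) [Fintype J] (c : J → K) (x : J → Fin (m+1) → K),
      φ = ∑ j, c j • nu d (x j) → n ≤ Fintype.card J)
    (J : Type) [Fintype J] (hJ : Fintype.card J = n) (c : J → K) (x : J → Fin (m+1) → K)
    (hx : ∀ j, x j ≠ 0) (hup : φ = ∑ j, c j • nu d (x j)) :
    srank d (Projectivization.mk K φ hφ) = n := by
  obtain ⟨u, hu⟩ := Projectivization.exists_smul_eq_mk_rep K φ hφ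
  have hlow2 : ∀ S : Finset (PN K m d), ↑S ⊆ XSet K m d →
      φ ∈ Submodule.span K (Projectivization.rep '' (S : Set (PN K m d))) → n ≤ S.card := by
    intro S hS h
    obtain ⟨c', x', h'⟩ := of_fin S hS φ h
    have := hlow S c' x' h'
    simpa using this
  have hiff : ∀ V : Submodule K (Module.Dual K (Hd K m d)),
      (Projectivization.mk K φ hφ).rep ∈ V ↔ φ ∈ V := by
    intro V; rw [← hu]; exact V.smul_mem_iff u.ne_zero
  rw [srank, rankWrt]
  obtain ⟨S, hS1, hS2, hS3⟩ := to_fin (d := d) c x hx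
  rw [← hup] at hS3
  have hmem : n ∈ {r | ∃ S : Finset (PN K m d), ↑S ⊆ XSet K m d ∧ S.card = r ∧
    (Projectivization.mk K φ hφ).rep ∈ Submodule.span K (Projectivization.rep '' (S : Set (PN K m d)))} :=
    ⟨S, hS1, le_antisymm (hS2.trans hJ.le) (hlow2 S hS1 hS3), (hiff _).2 hS3⟩
  apply le_antisymm (Nat.sInf_le hmem)
  refine le_csInf ⟨n, hmem⟩ ?_
  rintro r ⟨S, h1, h2, h3⟩
  rw [← h2]
  exact hlow2 S h1 ((hiff _).1 h3)

/-- polynomial curve in a vector space -/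
def PC {K V : Type} [Field K] [AddCommGroup V] [Module K V] (γ : K → V) : Prop :=
  ∀ ℓ : V →ₗ[K] K, ∃ p : Polynomial K, ∀ t, ℓ (γ t) = p.eval t

theorem PC.add {K V : Type} [Field K] [AddCommGroup V] [Module K V] {γ δ : K → V} (h1 : PC γ) (h2 : PC δ) :
    PC (fun t => γ t + δ t) := by
  intro ℓ
  obtain ⟨p, hp⟩ := h1 ℓ
  obtain ⟨q, hq⟩ := h2 ℓ
  exact ⟨p + q, fun t => by rw [map_add, hp, hq, Polynomial.eval_add]⟩

theorem PC.sum {K V ι : Type} [Field K] [AddCommGroup V] [Module K V] (s : Finset ι) {γ : ι → K → V}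
    (h1 : ∀ i, PC (γ i)) : PC (fun t => ∑ i ∈ s, γ i t) := by
  intro ℓ
  choose p hp using fun i => h1 i ℓ
  refine ⟨∑ i ∈ s, p i, fun t => ?_⟩
  rw [map_sum, Polynomial.eval_finset_sum]
  exact Finset.sum_congr rfl fun i _ => hp i t

theorem PC.mono {K V : Type} [Field K] [AddCommGroup V] [Module K V] (n : ℕ) (v : V) :
    PC (fun t : K => t ^ n • v) := by
  intro ℓ
  exact ⟨Polynomial.C (ℓ v) * Polynomial.X ^ n, fun t => by
    rw [map_smul, smul_eq_mul, Polynomial.eval_mul, Polynomial.eval_C, Polynomial.eval_pow, Polynomial.eval_X, mul_comm]⟩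

theorem PC.const {K V : Type} [Field K] [AddCommGroup V] [Module K V] (v : V) :
    PC (fun _ : K => v) := by
  intro ℓ
  exact ⟨Polynomial.C (ℓ v), fun t => by simp⟩

theorem PC.poly {K V : Type} [Field K] [AddCommGroup V] [Module K V] {γ : K → V} (h : PC γ) (b : K)
    {F : V → K} (hF : F ∈ polyFunctions K V) : ∃ p : Polynomial K, ∀ t, F (b • γ t) = p.eval t := by
  induction hF using Algebra.adjoin_induction with
  | mem g hg =>
    obtain ⟨ℓ, rfl⟩ := hg
    obtain ⟨p, hp⟩ := h ℓ
    exact ⟨Polynomial.C b * p, fun t => by simp [hp]⟩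
  | algebraMap r => exact ⟨Polynomial.C r, fun t => by simp⟩
  | add f g _ _ hf hg =>
    obtain ⟨p, hp⟩ := hf
    obtain ⟨q, hq⟩ := hg
    exact ⟨p + q, fun t => by rw [Pi.add_apply, hp, hq, Polynomial.eval_add]⟩
  | mul f g _ _ hf hg =>
    obtain ⟨p, hp⟩ := hf
    obtain ⟨q, hq⟩ := hg
    exact ⟨p * q, fun t => by rw [Pi.mul_apply, hp, hq, Polynomial.eval_mul]⟩

theorem det_poly {K V : Type} [Field K] [AddCommGroup V] [Module K V] {n : ℕ}
    (M : Fin n → Fin n → V →ₗ[K] K) :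
    (fun v => (Matrix.of fun a b => M a b v).det) ∈ polyFunctions K V := by
  have : (fun v => (Matrix.of fun a b => M a b v).det) =
      ∑ σ : Equiv.Perm (Fin n), (Equiv.Perm.sign σ : ℤ) • ∏ i, (⇑(M (σ i) i) : V → K) := by
    ext v
    rw [Matrix.det_apply]
    simp [Finset.sum_apply, Finset.prod_apply, Units.smul_def]
  rw [this]
  refine Subalgebra.sum_mem _ fun σ _ => Subalgebra.zsmul_mem _ (Subalgebra.prod_mem _ fun i _ => ?_) _
  exact Algebra.subset_adjoin ⟨_, rfl⟩

theorem det_zero {K : Type} [Field K] {n : ℕ} {J : Type} [Fintype J] (hJ : Fintype.card J < n)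
    (U : Matrix (Fin n) J K) (V : Matrix J (Fin n) K) : (U * V).det = 0 := by
  by_contra h
  have h1 := Matrix.rank_of_isUnit (U * V) ((Matrix.isUnit_iff_isUnit_det _).2 (IsUnit.mk0 _ h))
  have h2 := Matrix.rank_mul_le_left U V
  have h3 := Matrix.rank_le_card_width U
  simp at h1
  omega

theorem brank_eq {K : Type} [Field K] [Infinite K] {m d s N N' : ℕ} (hs : 0 < s)
    (φ : Module.Dual K (Hd K m d)) (hφ : φ ≠ 0) (hNN : N + N' = d)
    (f g : Fin s → PR K m) (hf : ∀ a, (f a).IsHomogeneous N) (hg : ∀ a, (g a).IsHomogeneous N')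
    (hdet : (Matrix.of fun a b => φ ⟨f a * g b, hNN ▸ (hf a).mul (hg b)⟩).det ≠ 0)
    (γ : K → Module.Dual K (Hd K m d)) (hγ : PC γ) (hγ0 : γ 0 = φ)
    (hup : ∀ t, t ≠ 0 → ∃ (J : Type) (_ : Fintype J) (c : J → K) (x : J → Fin (m+1) → K),
      Fintype.card J ≤ s ∧ (∀ j, x j ≠ 0) ∧ γ t = ∑ j, c j • nu d (x j)) :
    brank d (Projectivization.mk K φ hφ) = s := by
  obtain ⟨u, hu⟩ := Projectivization.exists_smul_eq_mk_rep K φ hφ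
  have hmem : s ∈ {s | 0 < s ∧ Projectivization.mk K φ hφ ∈ secantWrt (XSet K m d) s} := by
    refine ⟨hs, ?_⟩
    intro F hF hvan c
    have hF0 : F 0 = 0 := by
      have h1 : (Pi.single 0 1 : Fin (m+1) → K) ≠ 0 := by simp
      have := hvan (Projectivization.mk K _ (nu_ne d _ h1)) ⟨{Projectivization.mk K _ (nu_ne d _ h1)}, by
        simpa using mk_mem_XSet d _ h1, by rw [Finset.card_singleton]; exact hs, Submodule.subset_span ⟨_, by simp, rfl⟩⟩ 0
      simpa using this
    have hFt : ∀ t, t ≠ 0 → F ((c * u) • γ t) = 0 := by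
      intro t ht
      by_cases h0 : γ t = 0
      · rw [h0, smul_zero, hF0]
      · obtain ⟨J, iJ, c', x, hJ, hx, h⟩ := hup t ht
        obtain ⟨S, hS1, hS2, hS3⟩ := to_fin (d := d) c' x hx
        rw [← h] at hS3
        obtain ⟨u', hu'⟩ := Projectivization.exists_smul_eq_mk_rep K (γ t) h0
        have := hvan (Projectivization.mk K (γ t) h0) ⟨S, hS1, hS2.trans hJ, by
          rw [← hu']; exact Submodule.smul_of_tower_mem _ _ hS3⟩ (c * u * (u'⁻¹ : Kˣ))
        rw [← hu', mul_smul, ← Units.smul_def, inv_smul_smul] at this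
        exact this
    obtain ⟨p, hp⟩ := hγ.poly (c * u) hF
    have hp0 : Polynomial.X * p = 0 := by
      apply Polynomial.funext
      intro t
      by_cases ht : t = 0
      · simp [ht]
      · rw [Polynomial.eval_mul, ← hp, hFt t ht]; simp
    have hp1 := (mul_eq_zero.1 hp0).resolve_left Polynomial.X_ne_zero
    have := hp 0
    rw [hγ0, hp1, Polynomial.eval_zero, mul_smul, ← Units.smul_def, hu] at this
    exact this
  apply le_antisymm (Nat.sInf_le hmem)
  refine le_csInf ⟨s, hmem⟩ ?_
  rintro s' ⟨hs', hP⟩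
  by_contra hlt
  have hlt : s' < s := by omega
  let M : Fin s → Fin s → Module.Dual K (Hd K m d) →ₗ[K] K := fun a b =>
    LinearMap.applyₗ (⟨f a * g b, hNN ▸ (hf a).mul (hg b)⟩ : Hd K m d)
  have h := hP _ (det_poly M) ?_ 1
  · rw [one_smul, ← hu] at h
    have h2 : (Matrix.of fun a b => M a b (u • φ)) = (u : K) • (Matrix.of fun a b => φ ⟨f a * g b, hNN ▸ (hf a).mul (hg b)⟩) := by
      ext a b; simp [M, Units.smul_def]
    change (Matrix.of fun a b => M a b (u • φ)).det = 0 at h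
    rw [h2, Matrix.det_smul] at h
    rcases mul_eq_zero.1 h with h | h
    · exact pow_ne_zero _ u.ne_zero h
    · exact hdet h
  · rintro Q ⟨S, hS1, hS2, hS3⟩ c
    obtain ⟨c', x, hc⟩ := of_fin S hS1 _ hS3
    have h2 : (Matrix.of fun a b => M a b (c • Q.rep)) =
      (Matrix.of fun a (j : S) => c * c' j * MvPolynomial.eval (x j) (f a)) *
      (Matrix.of fun (j : S) b => MvPolynomial.eval (x j) (g b)) := by
      ext a b
      rw [Matrix.mul_apply]
      simp only [Matrix.of_apply, M, LinearMap.applyₗ_apply_apply, hc, LinearMap.smul_apply, LinearMap.sum_apply,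
        nu_apply, map_mul, smul_eq_mul, Finset.mul_sum]
      exact Finset.sum_congr rfl fun j _ => by ring
    change (Matrix.of fun a b => M a b (c • Q.rep)).det = 0
    rw [h2]
    apply det_zero
    simpa using lt_of_le_of_lt hS2 hlt
end S11

namespace S11

theorem ex_prim (K : Type) [Field K] [IsAlgClosed K] [CharZero K] (n : ℕ) (h : n ≠ 0) :
    ∃ z : K, IsPrimitiveRoot z n := by
  have : NeZero (n : K) := ⟨by exact_mod_cast h⟩
  have : NeZero n := ⟨h⟩
  exact HasEnoughRootsOfUnity.exists_primitiveRoot K n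

theorem root_sum {K : Type} [Field K] {n : ℕ} {z : K} (hz : IsPrimitiveRoot z n) (hn : n ≠ 0) (l : ℤ) :
    ∑ a : Fin n, (z ^ l) ^ (a : ℕ) = if (n : ℤ) ∣ l then (n : K) else 0 := by
  rw [Fin.sum_univ_eq_sum_range (fun a => (z ^ l) ^ a) n]
  split_ifs with h
  · rw [(hz.zpow_eq_one_iff_dvd l).2 h]; simp
  · have h1 : z ^ l ≠ 1 := fun h1 => h ((hz.zpow_eq_one_iff_dvd l).1 h1)
    rw [geom_sum_eq h1, ← zpow_natCast, ← zpow_mul, mul_comm, zpow_mul, zpow_natCast, hz.pow_eq_one]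
    simp

theorem avg {K M : Type} [Field K] [CharZero K] [AddCommGroup M] [Module K M] {n : ℕ} {z : K} (hz : IsPrimitiveRoot z n)
    (hn : n ≠ 0) (d j : ℕ) (x : K) (ψ : ℕ → M) :
    ∑ a : Fin n, ((n : K)⁻¹ * (z ^ (-(j : ℤ))) ^ (a : ℕ)) • (∑ i ∈ Finset.range (d+1), (x * z ^ (a : ℕ)) ^ i • ψ i) =
      ∑ i ∈ Finset.range (d+1), if (n : ℤ) ∣ (i : ℤ) - j then x ^ i • ψ i else 0 := by
  have hz0 : z ≠ 0 := hz.ne_zero hn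
  simp only [Finset.smul_sum]
  rw [Finset.sum_comm]
  refine Finset.sum_congr rfl fun i _ => ?_
  have : ∀ a : Fin n, ((n : K)⁻¹ * (z ^ (-(j : ℤ))) ^ (a : ℕ)) • (x * z ^ (a : ℕ)) ^ i • ψ i =
      ((n : K)⁻¹ * x ^ i * (z ^ ((i : ℤ) - j)) ^ (a : ℕ)) • ψ i := by
    intro a
    rw [smul_smul]
    congr 1
    rw [sub_eq_add_neg, zpow_add₀ hz0, zpow_natCast, mul_pow, mul_pow, ← pow_mul, ← pow_mul, mul_comm i]
    ring
  simp only [this]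
  rw [← Finset.sum_smul, ← Finset.mul_sum, root_sum hz hn]
  split_ifs with h
  · congr 1
    have : (n : K) ≠ 0 := by exact_mod_cast hn
    field_simp
  · simp

/-- coefficient functional -/
noncomputable def psi {K : Type} [Field K] {m : ℕ} (d : ℕ) (p q : Fin (m+1) → K) (i : ℕ) : Module.Dual K (Hd K m d) :=
  (Polynomial.lcoeff K i) ∘ₗ (res K p q).toLinearMap ∘ₗ (Hd K m d).subtype

theorem psi_apply {K : Type} [Field K] {m : ℕ} (d : ℕ) (p q : Fin (m+1) → K) (i : ℕ) (f : Hd K m d) :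
    psi d p q i f = (res K p q (f : PR K m)).coeff i := rfl

theorem nu_psi {K : Type} [Field K] {m : ℕ} (d : ℕ) (p q : Fin (m+1) → K) (x : K) :
    nu d (p + x • q) = ∑ i ∈ Finset.range (d+1), x ^ i • psi d p q i := by
  ext f
  rw [nu_apply, ← eval_res, Polynomial.eval_eq_sum_range' (Nat.lt_succ_of_le (res_natDegree_le f.2 p q))]
  simp only [LinearMap.sum_apply, LinearMap.smul_apply, psi_apply, smul_eq_mul, mul_comm]

theorem psi_zero {K : Type} [Field K] {m : ℕ} (d : ℕ) (p q : Fin (m+1) → K) : psi d p q 0 = nu d p := by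
  ext f
  rw [psi_apply, nu_apply, res_coeff_zero]

theorem psi_top {K : Type} [Field K] [Infinite K] {m : ℕ} (d : ℕ) (p q : Fin (m+1) → K) : psi d p q d = nu d q := by
  ext f
  rw [psi_apply, nu_apply, res_coeff_top f.2]

/-- the functional -/
noncomputable def phi {K : Type} [Field K] {m k : ℕ} (d w : ℕ) (o y o' : Fin (m+1) → K) (e : Fin k → Fin (m+1) → K) :
    Module.Dual K (Hd K m d) :=
  psi d o y w + psi d o' o (w-1) + nu d o + ∑ i, nu d (e i)

theorem avg_nu {K : Type} [Field K] [CharZero K] {m n : ℕ} {z : K} (hz : IsPrimitiveRoot z n)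
    (hn : n ≠ 0) (d j : ℕ) (x : K) (p q : Fin (m+1) → K) :
    ∑ a : Fin n, ((n : K)⁻¹ * (z ^ (-(j : ℤ))) ^ (a : ℕ)) • nu d (p + (x * z ^ (a : ℕ)) • q) =
      ∑ i ∈ Finset.range (d+1), if (n : ℤ) ∣ (i : ℤ) - j then x ^ i • psi d p q i else 0 := by
  simp only [nu_psi]
  exact avg hz hn d j x _

theorem ne_of_indep {K V : Type} [Field K] [AddCommGroup V] [Module K V] {o y : V}
    (h : LinearIndependent K ![o, y]) (t : K) : o + t • y ≠ 0 := by
  intro h2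
  have := (LinearIndependent.pair_iff.1 h) 1 t (by rw [one_smul]; exact h2)
  exact one_ne_zero this.1

theorem rank_up {K : Type} [Field K] [IsAlgClosed K] [CharZero K] {m k : ℕ} (d w : ℕ) (hw : 2 ≤ w)
    (hd : 4 * w + 2 * k + 1 ≤ d)
    (o y o' : Fin (m+1) → K) (e : Fin k → Fin (m+1) → K)
    (h1 : LinearIndependent K ![o, y]) (h2 : LinearIndependent K ![o', o]) (he : ∀ i, e i ≠ 0) :
    ∃ (c : (Fin (d+1-w) ⊕ Fin (d+1-w)) ⊕ Fin k → K) (x : (Fin (d+1-w) ⊕ Fin (d+1-w)) ⊕ Fin k → Fin (m+1) → K),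
      (∀ j, x j ≠ 0) ∧ phi d w o y o' e = ∑ j, c j • nu d (x j) := by
  set n := d + 1 - w with hn
  have hn0 : n ≠ 0 := by omega
  obtain ⟨z, hz⟩ := ex_prim K n hn0
  refine ⟨Sum.elim (Sum.elim (fun a => (n : K)⁻¹ * (z ^ (-(w : ℤ))) ^ (a : ℕ))
      (fun a => (n : K)⁻¹ * (z ^ (-((w - 1 : ℕ) : ℤ))) ^ (a : ℕ))) (fun _ => 1),
    Sum.elim (Sum.elim (fun a => o + ((1 : K) * z ^ (a : ℕ)) • y) (fun a => o' + ((1 : K) * z ^ (a : ℕ)) • o)) e, ?_, ?_⟩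
  · rintro ((a | a) | a)
    · exact ne_of_indep h1 _
    · exact ne_of_indep h2 _
    · exact he a
  · rw [Fintype.sum_sum_type, Fintype.sum_sum_type]
    simp only [Sum.elim_inl, Sum.elim_inr, one_smul]
    rw [avg_nu hz hn0 d w 1 o y, avg_nu hz hn0 d (w-1) 1 o' o]
    have s1 : (∑ i ∈ Finset.range (d+1), if (n : ℤ) ∣ (i : ℤ) - w then (1 : K) ^ i • psi d o y i else 0) = psi d o y w := by
      rw [Finset.sum_eq_single w]
      · simp
      · intro i hi hiw
        rw [if_neg]
        rintro ⟨l, hl⟩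
        have hi := Finset.mem_range.1 hi
        have h3 : l ≤ 0 := by
          by_contra h
          have : (n : ℤ) * 1 ≤ n * l := mul_le_mul_of_nonneg_left (by omega) (by omega)
          omega
        have h4 : 0 ≤ l := by
          by_contra h
          have : (n : ℤ) * l ≤ n * (-1) := mul_le_mul_of_nonneg_left (by omega) (by omega)
          omega
        have : l = 0 := le_antisymm h3 h4
        rw [this] at hl
        omega
      · intro h; exact absurd (Finset.mem_range.2 (by omega)) h
    have s2 : (∑ i ∈ Finset.range (d+1), if (n : ℤ) ∣ (i : ℤ) - ((w - 1 : ℕ) : ℤ) then (1 : K) ^ i • psi d o' o i else 0) =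
        psi d o' o (w-1) + psi d o' o d := by
      rw [Finset.sum_eq_add_of_mem (w-1) d (Finset.mem_range.2 (by omega)) (Finset.mem_range.2 (by omega)) (by omega)]
      · rw [if_pos (by simp), if_pos ⟨1, by omega⟩]; simp
      · intro i hi hiw
        rw [if_neg]
        rintro ⟨l, hl⟩
        have hi := Finset.mem_range.1 hi
        have h3 : l ≤ 1 := by
          by_contra h
          have : (n : ℤ) * 2 ≤ n * l := mul_le_mul_of_nonneg_left (by omega) (by omega)
          omega
        have h4 : 0 ≤ l := by
          by_contra h
          have : (n : ℤ) * l ≤ n * (-1) := mul_le_mul_of_nonneg_left (by omega) (by omega)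
          omega
        have : l = 0 ∨ l = 1 := by omega
        rcases this with this | this
        · rw [this] at hl
          omega
        · rw [this] at hl
          omega
    rw [s1, s2, psi_top, phi]
    abel

/-- the degeneration -/
noncomputable def gam {K : Type} [Field K] {m k : ℕ} (d w : ℕ) (o y o' : Fin (m+1) → K) (e : Fin k → Fin (m+1) → K)
    (t : K) : Module.Dual K (Hd K m d) :=
  (∑ i ∈ Finset.range (d+1), if ((w+1 : ℕ) : ℤ) ∣ (i : ℤ) - (w : ℕ) then t ^ (i - w) • psi d o y i else 0) +
  (∑ i ∈ Finset.range (d+1), if ((w+1 : ℕ) : ℤ) ∣ (i : ℤ) - (0 : ℕ) then t ^ i • psi d o y i else 0) +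
  (∑ i ∈ Finset.range (d+1), if (w : ℤ) ∣ (i : ℤ) - (w - 1 : ℕ) then t ^ (i - (w - 1)) • psi d o' o i else 0) +
  ∑ i, nu d (e i)

theorem gam_PC {K : Type} [Field K] {m k : ℕ} (d w : ℕ) (o y o' : Fin (m+1) → K) (e : Fin k → Fin (m+1) → K) :
    PC (gam d w o y o' e) := by
  have key : ∀ (P : Prop) [Decidable P] (n : ℕ) (v : Module.Dual K (Hd K m d)), PC (fun t : K => if P then t ^ n • v else 0) := by
    intro P _ n v
    by_cases h : P
    · simp only [h, if_true]; exact PC.mono n v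
    · simp only [h, if_false]; exact PC.const 0
  exact (((PC.sum _ fun i => key _ _ _).add (PC.sum _ fun i => key _ _ _)).add (PC.sum _ fun i => key _ _ _)).add
    (PC.const _)

theorem dvd_ge {w i n : ℕ} (hwn : w < n) (h : (n : ℤ) ∣ (i : ℤ) - (w : ℕ)) : w ≤ i := by
  obtain ⟨l, hl⟩ := h
  by_contra hlt
  have h4 : 0 ≤ l := by
    by_contra h
    have : (n : ℤ) * l ≤ n * (-1) := mul_le_mul_of_nonneg_left (by omega) (by omega)
    omega
  have := mul_nonneg (show (0 : ℤ) ≤ n by omega) h4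
  omega

theorem gam_part0 {K M : Type} [Field K] [AddCommGroup M] [Module K M] (d w n : ℕ) (hwn : w < n) (hwd : w ≤ d) (ψ : ℕ → M) :
    (∑ i ∈ Finset.range (d+1), if (n : ℤ) ∣ (i : ℤ) - (w : ℕ) then (0 : K) ^ (i - w) • ψ i else 0) = ψ w := by
  rw [Finset.sum_eq_single w]
  · simp
  · intro i _ hi
    split_ifs with h
    · have := dvd_ge hwn h
      rw [zero_pow (by omega), zero_smul]
    · rfl
  · intro h; exact absurd (Finset.mem_range.2 (by omega)) h

theorem gam_zero {K : Type} [Field K] {m k : ℕ} (d w : ℕ) (hw : 2 ≤ w) (hd : 4 * w + 2 * k + 1 ≤ d)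
    (o y o' : Fin (m+1) → K) (e : Fin k → Fin (m+1) → K) :
    gam d w o y o' e 0 = phi d w o y o' e := by
  have h := gam_part0 (K := K) d 0 (w+1) (by omega) (by omega) (psi d o y)
  simp only [Nat.sub_zero] at h
  rw [gam, phi, gam_part0 d w (w+1) (by omega) (by omega) (psi d o y), h, gam_part0 d (w-1) w (by omega) (by omega) (psi d o' o), psi_zero]
  abel

theorem gam_partt {K M : Type} [Field K] [AddCommGroup M] [Module K M] (d w n : ℕ) (hwn : w < n) (ψ : ℕ → M)
    (t : K) (ht : t ≠ 0) :
    (∑ i ∈ Finset.range (d+1), if (n : ℤ) ∣ (i : ℤ) - (w : ℕ) then t ^ (i - w) • ψ i else 0) =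
    (t ^ w)⁻¹ • (∑ i ∈ Finset.range (d+1), if (n : ℤ) ∣ (i : ℤ) - (w : ℕ) then t ^ i • ψ i else 0) := by
  rw [Finset.smul_sum]
  refine Finset.sum_congr rfl fun i _ => ?_
  split_ifs with h
  · rw [smul_smul, pow_sub₀ t ht (dvd_ge hwn h), mul_comm]
  · simp

theorem gam_up {K : Type} [Field K] [IsAlgClosed K] [CharZero K] {m k : ℕ} (d w : ℕ) (hw : 2 ≤ w)
    (o y o' : Fin (m+1) → K) (e : Fin k → Fin (m+1) → K)
    (h1 : LinearIndependent K ![o, y]) (h2 : LinearIndependent K ![o', o]) (he : ∀ i, e i ≠ 0) (t : K) (ht : t ≠ 0) :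
    ∃ (c : (Fin (w+1) ⊕ Fin w) ⊕ Fin k → K) (x : (Fin (w+1) ⊕ Fin w) ⊕ Fin k → Fin (m+1) → K),
      (∀ j, x j ≠ 0) ∧ gam d w o y o' e t = ∑ j, c j • nu d (x j) := by
  obtain ⟨z, hz⟩ := ex_prim K (w+1) (by omega)
  obtain ⟨z', hz'⟩ := ex_prim K w (by omega)
  refine ⟨Sum.elim (Sum.elim (fun a => (t ^ w)⁻¹ * (((w+1 : ℕ) : K)⁻¹ * (z ^ (-(w : ℤ))) ^ (a : ℕ)) +
        (((w+1 : ℕ) : K)⁻¹ * (z ^ (-((0 : ℕ) : ℤ))) ^ (a : ℕ)))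
      (fun a => (t ^ (w-1))⁻¹ * ((w : K)⁻¹ * (z' ^ (-((w - 1 : ℕ) : ℤ))) ^ (a : ℕ)))) (fun _ => 1),
    Sum.elim (Sum.elim (fun a => o + (t * z ^ (a : ℕ)) • y) (fun a => o' + (t * z' ^ (a : ℕ)) • o)) e, ?_, ?_⟩
  · rintro ((a | a) | a)
    · exact ne_of_indep h1 _
    · exact ne_of_indep h2 _
    · exact he a
  · rw [Fintype.sum_sum_type, Fintype.sum_sum_type]
    simp only [Sum.elim_inl, Sum.elim_inr, one_smul, add_smul, Finset.sum_add_distrib, mul_smul (t ^ _)⁻¹, ← Finset.smul_sum]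
    rw [avg_nu hz (by omega) d w t o y, avg_nu hz (by omega) d 0 t o y, avg_nu hz' (by omega) d (w-1) t o' o, gam,
      gam_partt d w (w+1) (by omega) (psi d o y) t ht, gam_partt d (w-1) w (by omega) (psi d o' o) t ht]
end S11

namespace S11

/-- pull back along a linear map -/
noncomputable def pb {K : Type} [Field K] {m : ℕ} (L : (Fin (m+1) → K) →ₗ[K] (Fin 3 → K)) : S3 K →ₐ[K] PR K m :=
  MvPolynomial.aeval fun i => lf (LinearMap.proj i ∘ₗ L)

theorem pb_hom {K : Type} [Field K] {m n : ℕ} (L : (Fin (m+1) → K) →ₗ[K] (Fin 3 → K)) {f : S3 K}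
    (hf : f.IsHomogeneous n) : (pb L f).IsHomogeneous n := by
  have := hf.aeval (fun i => lf (LinearMap.proj i ∘ₗ L)) (fun i => lf_hom _)
  rwa [one_mul] at this

theorem pb_res {K : Type} [Field K] {m : ℕ} (L : (Fin (m+1) → K) →ₗ[K] (Fin 3 → K)) (p q : Fin (m+1) → K) (f : S3 K) :
    res K p q (pb L f) = res K (L p) (L q) f := by
  have : (res K p q).comp (pb L) = res K (L p) (L q) := by
    apply MvPolynomial.algHom_ext
    intro i
    simp only [AlgHom.comp_apply, pb, MvPolynomial.aeval_X]
    rw [lf_res]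
    simp [res]
  exact congrArg (fun a => a f) this

theorem pb_eval {K : Type} [Field K] {m : ℕ} (L : (Fin (m+1) → K) →ₗ[K] (Fin 3 → K)) (p : Fin (m+1) → K) (f : S3 K) :
    MvPolynomial.eval p (pb L f) = MvPolynomial.eval (L p) f := by
  rw [← res_coeff_zero _ p 0, ← res_coeff_zero _ (L p) 0, pb_res, map_zero]

theorem phi_pb {K : Type} [Field K] {m k : ℕ} (d w : ℕ) (o y o' : Fin (m+1) → K) (e : Fin k → Fin (m+1) → K)
    (L : (Fin (m+1) → K) →ₗ[K] (Fin 3 → K)) (h0 : L o = v0 K) (h1 : L y = v1 K) (h2 : L o' = v2 K)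
    (F : Hd K m d) (f : S3 K) (hF : (F : PR K m) = pb L f) :
    phi d w o y o' e F = (res K (v0 K) (v1 K) f).coeff w + (res K (v2 K) (v0 K) f).coeff (w-1)
      + MvPolynomial.eval (v0 K) f + ∑ i, MvPolynomial.eval (L (e i)) f := by
  simp only [phi, LinearMap.add_apply, LinearMap.sum_apply, psi_apply, nu_apply, hF, pb_res, pb_eval, h0, h1, h2]

theorem phi_low {K : Type} [Field K] [Infinite K] {m k : ℕ} (d w : ℕ) (hw : 2 ≤ w)
    (hd : 4 * w + 2 * k + 1 ≤ d) (o y o' : Fin (m+1) → K) (e : Fin k → Fin (m+1) → K)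
    (L : (Fin (m+1) → K) →ₗ[K] (Fin 3 → K)) (h0 : L o = v0 K) (h1 : L y = v1 K) (h2 : L o' = v2 K)
    (he1 : ∀ i, L (e i) 1 ≠ 0) (he2 : ∀ i, L (e i) 2 ≠ 0)
    (hee : ∀ i j, i ≠ j → LinearIndependent K ![L (e i), L (e j)])
    (J : Type) [Fintype J] (c : J → K) (x : J → Fin (m+1) → K)
    (h : phi d w o y o' e = ∑ j, c j • nu d (x j)) : 2 * (d + 1 - w) + k ≤ Fintype.card J := by
  refine rank_lower3 w d k hw hd (fun i => L (e i)) he1 he2 hee c (fun j => L (x j)) fun f hf => ?_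
  rw [← phi_pb d w o y o' e L h0 h1 h2 ⟨pb L f, pb_hom L hf⟩ f rfl, h]
  simp [LinearMap.sum_apply, nu_apply, pb_eval]

theorem phi_gram {K : Type} [Field K] [Infinite K] {m k : ℕ} (d w s : ℕ) (hw : 2 ≤ w) (hs : s = 2 * w + 1 + k)
    (hd : 2 * s ≤ d + 1) (o y o' : Fin (m+1) → K) (e : Fin k → Fin (m+1) → K)
    (L : (Fin (m+1) → K) →ₗ[K] (Fin 3 → K)) (h0 : L o = v0 K) (h1 : L y = v1 K) (h2 : L o' = v2 K)
    (he1 : ∀ i, L (e i) 1 ≠ 0) 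
    (hee : ∀ i j, i ≠ j → LinearIndependent K ![L (e i), L (e j)]) (hNN : (s - 1) + (d - (s - 1)) = d) :
    ∃ (f g : Fin s → PR K m) (hf : ∀ a, (f a).IsHomogeneous (s-1)) (hg : ∀ a, (g a).IsHomogeneous (d - (s-1))),
    (Matrix.of fun a b => phi d w o y o' e ⟨f a * g b, hNN ▸ (hf a).mul (hg b)⟩).det ≠ 0 := by
  classical
  have hv0 : v0 K ≠ 0 := fun h => by simpa using congrFun h 0
  have hv2 : v2 K ≠ 0 := fun h => by simpa using congrFun h 2
  have he0 : ∀ i, L (e i) ≠ 0 := fun i h => he1 i (by rw [h]; rfl)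
  choose v' hv' using fun i => ex_indep (L (e i)) (he0 i)
  have i02 : LinearIndependent K ![v0 K, v2 K] := by
    rw [LinearIndependent.pair_iff' hv0]
    intro a ha
    simpa using congrFun ha 2
  have i01 : LinearIndependent K ![v0 K, v1 K] := by
    rw [LinearIndependent.pair_iff' hv0]
    intro a ha
    simpa using congrFun ha 1
  have i0e : ∀ i, LinearIndependent K ![v0 K, L (e i)] := by
    intro i
    rw [LinearIndependent.pair_iff' hv0]
    intro a ha
    apply he1 i
    rw [← ha]; simp
  have i2e : ∀ i, LinearIndependent K ![v2 K, L (e i)] := by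
    intro i
    rw [LinearIndependent.pair_iff' hv2]
    intro a ha
    apply he1 i
    rw [← ha]; simp
  let C : Curv K (Option (Option (Fin k))) :=
  { p := fun | none => v0 K | some none => v2 K | some (some i) => L (e i)
    v := fun | none => v1 K | some none => v0 K | some (some i) => v' i
    n := fun | none => w + 1 | some none => w | some (some i) => 1
    hn := by rintro (_ | _ | i) <;> simp; omega
    hpv := by
      rintro (_ | _ | i)
      · exact i01
      · exact LinearIndependent.pair_symm_iff.1 i02
      · exact hv' i
    hpp := by
      rintro (_ | _ | i) (_ | _ | j) hne
      · exact absurd rfl hne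
      · exact i02
      · exact i0e j
      · exact LinearIndependent.pair_symm_iff.1 i02
      · exact absurd rfl hne
      · exact i2e j
      · exact LinearIndependent.pair_symm_iff.1 (i0e i)
      · exact LinearIndependent.pair_symm_iff.1 (i2e i)
      · exact hee i j (fun h => hne (by rw [h])) }
  let T : C.Dat :=
  { τ := fun | none => Polynomial.lcoeff K w + Polynomial.lcoeff K 0 | some none => Polynomial.lcoeff K (w-1) 
             | some (some i) => Polynomial.lcoeff K 0
    α := fun _ => 1
    hα := fun _ => one_ne_zero
    h1 := by
      rintro (_ | _ | i) g
      · change ((Polynomial.lcoeff K w + Polynomial.lcoeff K 0 : Polynomial K →ₗ[K] K)) (Polynomial.X ^ (w+1) * g) = 0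
        simp [Polynomial.coeff_X_pow_mul']
      · change (Polynomial.lcoeff K (w-1)) (Polynomial.X ^ w * g) = 0
        rw [Polynomial.lcoeff_apply, Polynomial.coeff_X_pow_mul', if_neg (by omega)]
      · change (Polynomial.lcoeff K 0) (Polynomial.X ^ 1 * g) = 0
        simp
    h2 := by
      rintro (_ | _ | i) g
      · change ((Polynomial.lcoeff K w + Polynomial.lcoeff K 0 : Polynomial K →ₗ[K] K)) (Polynomial.X ^ w * g) = _
        rw [LinearMap.add_apply, Polynomial.lcoeff_apply, Polynomial.lcoeff_apply, Polynomial.coeff_X_pow_mul',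
          Polynomial.coeff_X_pow_mul', if_pos le_rfl, if_neg (by omega)]
        simp
      · change (Polynomial.lcoeff K (w-1)) (Polynomial.X ^ (w-1) * g) = _
        rw [Polynomial.lcoeff_apply, Polynomial.coeff_X_pow_mul', if_pos le_rfl]
        simp
      · change (Polynomial.lcoeff K 0) (Polynomial.X ^ 0 * g) = _
        simp }
  have hsum : ∑ c, C.n c = s := by
    rw [Fintype.sum_option, Fintype.sum_option]
    simp [C]; omega
  obtain ⟨f, g, hf, hg, hdet⟩ := T.gram (s-1) (d - (s-1)) (by omega) (by omega)
  have hLam : ∀ a b, T.Lam (f a * g b) = phi d w o y o' e ⟨pb L (f a) * pb L (g b),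
      hNN ▸ (pb_hom L (hf a)).mul (pb_hom L (hg b))⟩ := by
    intro a b
    rw [phi_pb d w o y o' e L h0 h1 h2 _ (f a * g b) (by simp), T.Lam_apply, Fintype.sum_option, Fintype.sum_option]
    simp only [T, C, Curv.r, LinearMap.add_apply, Polynomial.lcoeff_apply, res_coeff_zero]
    ring
  simp only [hLam] at hdet
  subst hs
  generalize ∑ c, C.n c = s' at *
  subst hsum
  exact ⟨fun a => pb L (f a), fun b => pb L (g b), fun a => pb_hom L (hf a), fun b => pb_hom L (hg b), hdet⟩

theorem main_vec {K : Type} [Field K] [IsAlgClosed K] [CharZero K] {m k : ℕ} (d w s : ℕ) (hw : 2 ≤ w)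
    (hs : s = 2 * w + 1 + k) (hd : 2 * s ≤ d + 1) (o y o' : Fin (m+1) → K) (e : Fin k → Fin (m+1) → K)
    (L : (Fin (m+1) → K) →ₗ[K] (Fin 3 → K)) (h0 : L o = v0 K) (h1 : L y = v1 K) (h2 : L o' = v2 K)
    (he1 : ∀ i, L (e i) 1 ≠ 0) (he2 : ∀ i, L (e i) 2 ≠ 0)
    (hee : ∀ i j, i ≠ j → LinearIndependent K ![L (e i), L (e j)]) :
    ∃ hφ : phi d w o y o' e ≠ 0, srank d (Projectivization.mk K _ hφ) = 2 * (d + 1 - w) + k ∧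
      brank d (Projectivization.mk K _ hφ) = s := by
  have hd2 : 4 * w + 2 * k + 1 ≤ d := by omega
  have i1 : LinearIndependent K ![o, y] := by
    rw [LinearIndependent.pair_iff]
    intro a b hab
    have := congrArg L hab
    rw [map_add, map_smul, map_smul, h0, h1, map_zero] at this
    exact ⟨by simpa using congrFun this 0, by simpa using congrFun this 1⟩
  have i2 : LinearIndependent K ![o', o] := by
    rw [LinearIndependent.pair_iff]
    intro a b hab
    have := congrArg L hab
    rw [map_add, map_smul, map_smul, h0, h2, map_zero] at this
    exact ⟨by simpa using congrFun this 2, by simpa using congrFun this 0⟩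
  have he0 : ∀ i, e i ≠ 0 := fun i h => he1 i (by rw [h, map_zero]; rfl)
  have hφ : phi d w o y o' e ≠ 0 := by
    intro h
    have := phi_low d w hw hd2 o y o' e L h0 h1 h2 he1 he2 hee (Fin 0) (fun _ => 0) (fun _ => 0) (by simp [h])
    simp at this
    omega
  refine ⟨hφ, ?_, ?_⟩
  · obtain ⟨c, x, hx, hup⟩ := rank_up d w hw hd2 o y o' e i1 i2 he0
    refine srank_eq _ hφ (fun J _ c x h => phi_low d w hw hd2 o y o' e L h0 h1 h2 he1 he2 hee J c x h) _ ?_ c x hx hup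
    simp; omega
  · have hNN : (s - 1) + (d - (s - 1)) = d := by omega
    obtain ⟨f, g, hf, hg, hdet⟩ := phi_gram d w s hw hs hd o y o' e L h0 h1 h2 he1 hee hNN
    refine brank_eq (by omega) _ hφ hNN f g hf hg hdet (gam d w o y o' e) (gam_PC d w o y o' e)
      (gam_zero d w hw hd2 o y o' e) fun t ht => ?_
    obtain ⟨c, x, hx, hup⟩ := gam_up d w hw o y o' e i1 i2 he0 t ht
    exact ⟨_, inferInstance, c, x, by simp; omega, hx, hup⟩
end S11

namespace S11

theorem ex_L {K : Type} [Field K] {m : ℕ} (o y o' : Fin (m+1) → K)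
    (h : LinearIndependent K ![o, y, o']) :
    ∃ L : (Fin (m+1) → K) →ₗ[K] (Fin 3 → K), L o = v0 K ∧ L y = v1 K ∧ L o' = v2 K := by
  have hk : LinearMap.ker (Fintype.linearCombination K ![o, y, o']) = ⊥ := by
    rw [LinearMap.ker_eq_bot]
    exact linearIndependent_iff_injective_fintypeLinearCombination.mp h
  obtain ⟨L, hL⟩ := LinearMap.exists_leftInverse_of_injective _ hk
  have key : ∀ c : Fin 3 → K, L (c 0 • o + c 1 • y + c 2 • o') = c := by
    intro c
    have := congrArg (fun T => T c) hL
    simp only [LinearMap.comp_apply, LinearMap.id_apply, Fintype.linearCombination_apply,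
      Fin.sum_univ_three] at this
    simpa using this
  refine ⟨L, ?_, ?_, ?_⟩
  · simpa using key (v0 K)
  · simpa using key (v1 K)
  · simpa using key (v2 K)

theorem idealOfSet_eval {K : Type} [Field K] {m : ℕ} (S : Set (Pm K m)) (f : PR K m)
    (hf : f ∈ idealOfSet S) (a : Pm K m) (ha : a ∈ S) : MvPolynomial.eval a.rep f = 0 := by
  have : idealOfSet S ≤ RingHom.ker (MvPolynomial.eval a.rep) := by
    refine Ideal.span_le.mpr ?_
    intro g hg
    exact hg.2 a ha
  exact this hf

theorem li_of_ne {K : Type} [Field K] {m : ℕ} {A B : Pm K m} (h : A ≠ B) :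
    LinearIndependent K ![A.rep, B.rep] := by
  rw [← Projectivization.independent_pair_iff_ne, Projectivization.independent_iff] at h
  have hh : Projectivization.rep ∘ ![A, B] = ![A.rep, B.rep] := by
    ext i : 1
    fin_cases i <;> rfl
  rw [hh] at h
  exact h

theorem span_pair_eq {K : Type} [Field K] {m : ℕ} {W : Submodule K (Fin (m+1) → K)}
    (hW : Module.finrank K W = 2) {x y : Fin (m+1) → K} (hx : x ∈ W) (hy : y ∈ W)
    (h : LinearIndependent K ![x, y]) : Submodule.span K {x, y} = W := by
  apply Submodule.eq_of_le_of_finrank_eq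
  · rw [Submodule.span_le]; rintro z (rfl | rfl) <;> assumption
  · have := finrank_span_eq_card h
    have hr : Set.range ![x, y] = {x, y} := by
      simp [Matrix.range_cons, Matrix.range_empty, Set.pair_comm]
    rw [hr] at this
    rw [hW]; exact this

theorem ex_y {K : Type} [Field K] {m : ℕ} {W : Submodule K (Fin (m+1) → K)}
    (hW : Module.finrank K W = 2) {x : Fin (m+1) → K} (hx0 : x ≠ 0) :
    ∃ y ∈ W, LinearIndependent K ![x, y] := by
  by_contra hc
  push Not at hc
  have hle : W ≤ Submodule.span K {x} := by
    intro z hz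
    have := hc z hz
    rw [LinearIndependent.pair_iff' hx0] at this
    push Not at this
    obtain ⟨a, ha⟩ := this
    exact Submodule.mem_span_singleton.mpr ⟨a, ha⟩
  have h1 := Submodule.finrank_mono hle
  rw [finrank_span_singleton hx0, hW] at h1
  omega

end S11

/-- Lemma 9 (`o4`): with `w ≥ 2`, `s ≥ 2w+1`, `d ≥ 2s-1`, distinct coplanar lines `D, R`
meeting at `O` spanning the plane `U`, `A₁ ⊂ D` the degree-`(w+1)` divisor supported at `O`,
`A₂ ⊂ R` the degree-`w` divisor supported at `O' ∈ R ∖ {O}`, and a general subset `E ⊂ U`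
of cardinality `s - 2w - 1`: there is `P ∈ ⟨ν_d(A₁ ∪ A₂ ∪ E)⟩` with `br(P) = s` and
`sr(P) = 2d+1+s-4w`. -/
theorem stmt11 (K : Type) [Field K] [IsAlgClosed K] [CharZero K]
    (m w s d : ℕ) (hm : 2 ≤ m) (hw : 2 ≤ w) (hs : 2 * w + 1 ≤ s) (hd : 2 * s ≤ d + 1)
    (WD WR : Submodule K (Fin (m+1) → K))
    (hWD : Module.finrank K WD = 2) (hWR : Module.finrank K WR = 2) (hDR : WD ≠ WR)
    (O : Pm K m)
    (hO : {a : Pm K m | a.submodule ≤ WD} ∩ {a : Pm K m | a.submodule ≤ WR} = {O})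
    (A1 : PSub K m) (hA1D : idealOfSet {a : Pm K m | a.submodule ≤ WD} ≤ A1.I)
    (hA1z : IsZeroDimI A1.I) (hA1deg : idealDeg A1.I = w + 1) (hA1sup : pzeroLocus A1.I = {O})
    (O' : Pm K m) (hO'R : O'.submodule ≤ WR) (hO'O : O' ≠ O)
    (A2 : PSub K m) (hA2R : idealOfSet {a : Pm K m | a.submodule ≤ WR} ≤ A2.I)
    (hA2z : IsZeroDimI A2.I) (hA2deg : idealDeg A2.I = w) (hA2sup : pzeroLocus A2.I = {O'}) :
    GenerallyOn (WD ⊔ WR) (s - (2 * w + 1)) (fun e =>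
      Function.Injective e →
        ∃ P : PN K m d,
          inSpanI (A1.I ⊓ A2.I ⊓ idealOfSet (Set.range e)) d P ∧
          brank d P = s ∧ srank d P + 4 * w = 2 * d + 1 + s) := by
  classical
  have hOmem : O ∈ {a : Pm K m | a.submodule ≤ WD} ∩ {a : Pm K m | a.submodule ≤ WR} := by
    rw [hO]; rfl
  have hrep : ∀ a : Pm K m, a.rep ∈ a.submodule := by
    intro a
    rw [Projectivization.submodule_eq]; exact Submodule.mem_span_singleton_self _
  have hoD : O.rep ∈ WD := hOmem.1 (hrep O)
  have hoR : O.rep ∈ WR := hOmem.2 (hrep O)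
  have ho'R : O'.rep ∈ WR := hO'R (hrep O')
  have ho'D : O'.rep ∉ WD := by
    intro h
    apply hO'O
    have : O' ∈ {a : Pm K m | a.submodule ≤ WD} ∩ {a : Pm K m | a.submodule ≤ WR} := by
      refine ⟨?_, hO'R⟩
      change O'.submodule ≤ WD
      rw [Projectivization.submodule_eq, Submodule.span_singleton_le_iff_mem]; exact h
    rw [hO] at this; exact this
  have hli2 : LinearIndependent K ![O'.rep, O.rep] := S11.li_of_ne hO'O
  have hspR : Submodule.span K {O'.rep, O.rep} = WR := S11.span_pair_eq hWR ho'R hoR hli2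
  obtain ⟨y, hyD, hoy⟩ := S11.ex_y hWD O.rep_nonzero
  have hspD : Submodule.span K {O.rep, y} = WD := S11.span_pair_eq hWD hoD hyD hoy
  have hli3 : LinearIndependent K ![O.rep, y, O'.rep] := by
    have : LinearIndependent K ![O'.rep, O.rep, y] := by
      refine linearIndependent_fin_cons.mpr ⟨hoy, ?_⟩
      simp only [Matrix.range_cons, Matrix.range_empty, Set.union_empty]
      intro h
      apply ho'D
      rw [← hspD]; exact h
    have h2 := this.comp ![1, 2, 0] (by decide)
    convert h2 using 1
    ext i : 1
    fin_cases i <;> rfl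
  obtain ⟨L, h0, h1, h2⟩ := S11.ex_L _ _ _ hli3
  refine ⟨![⟨O.rep, Submodule.mem_sup_left hoD⟩, ⟨y, Submodule.mem_sup_left hyD⟩,
    ⟨O'.rep, Submodule.mem_sup_right ho'R⟩], ?_, ?_⟩
  · apply le_antisymm
    · rw [Submodule.span_le]
      rintro _ ⟨j, rfl⟩
      exact Subtype.property _
    · refine sup_le ?_ ?_
      · refine hspD.symm.le.trans (Submodule.span_le.mpr ?_)
        rintro z (rfl | rfl)
        · exact Submodule.subset_span ⟨0, rfl⟩
        · exact Submodule.subset_span ⟨1, rfl⟩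
      · refine hspR.symm.le.trans (Submodule.span_le.mpr ?_)
        rintro z (rfl | rfl)
        · exact Submodule.subset_span ⟨2, rfl⟩
        · exact Submodule.subset_span ⟨0, rfl⟩
  refine ⟨∏ i, (MvPolynomial.X (i, 1) * MvPolynomial.X (i, 2)), ?_, ?_⟩
  · exact Finset.prod_ne_zero_iff.mpr fun i _ =>
      mul_ne_zero (MvPolynomial.X_ne_zero _) (MvPolynomial.X_ne_zero _)
  intro c hc e he hinj
  simp only [map_prod, map_mul, MvPolynomial.eval_X] at hc
  have hc' := Finset.prod_ne_zero_iff.mp hc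
  simp only [Fin.sum_univ_three] at he
  set ev : Fin (s - (2*w+1)) → Fin (m+1) → K :=
    fun i => c i 0 • O.rep + c i 1 • y + c i 2 • O'.rep with hev
  have he' : ∀ i, (e i).submodule = Submodule.span K {ev i} := fun i => he i
  have hLe : ∀ i, L (ev i) = c i := by
    intro i
    simp only [hev, map_add, map_smul, h0, h1, h2]
    ext j; fin_cases j <;> simp
  obtain ⟨hφ, hsr, hbr⟩ := S11.main_vec (k := s - (2*w+1)) d w s hw (by omega) hd O.rep y O'.rep ev L
    h0 h1 h2 (fun i => by rw [hLe]; exact left_ne_zero_of_mul (hc' i (Finset.mem_univ _)))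
    (fun i => by rw [hLe]; exact right_ne_zero_of_mul (hc' i (Finset.mem_univ _)))
    (by
      intro i j hij
      have hne := S11.li_of_ne (hinj.ne hij)
      have hmi : (e i).rep ∈ Submodule.span K {ev i} := by rw [← he']; exact hrep _
      have hmj : (e j).rep ∈ Submodule.span K {ev j} := by rw [← he']; exact hrep _
      have hli : LinearIndependent K ![ev i, ev j] := by
        obtain ⟨a, ha⟩ := Submodule.mem_span_singleton.mp hmi
        obtain ⟨b, hb⟩ := Submodule.mem_span_singleton.mp hmj
        have hi0 : a ≠ 0 := by
          rintro rfl; exact (e i).rep_nonzero (by rw [← ha, zero_smul])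
        have hj0 : b ≠ 0 := by
          rintro rfl; exact (e j).rep_nonzero (by rw [← hb, zero_smul])
        rw [LinearIndependent.pair_iff] at hne ⊢
        intro p q hpq
        have := hne (p * a⁻¹) (q * b⁻¹) (by
          rw [← ha, ← hb, smul_smul, smul_smul, mul_assoc, mul_assoc, inv_mul_cancel₀ hi0,
            inv_mul_cancel₀ hj0, mul_one, mul_one]
          exact hpq)
        simpa [hi0, hj0] using this
      have hcv : ∀ i, ev i = Fintype.linearCombination K ![O.rep, y, O'.rep] (L (ev i)) := by
        intro i
        rw [hLe, Fintype.linearCombination_apply, Fin.sum_univ_three]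
        rfl
      rw [LinearIndependent.pair_iff] at hli ⊢
      intro p q hpq
      apply hli
      rw [hcv i, hcv j, ← LinearMap.map_smul (Fintype.linearCombination K ![O.rep, y, O'.rep]),
        ← LinearMap.map_smul (Fintype.linearCombination K ![O.rep, y, O'.rep]), ← LinearMap.map_add,
        hpq, LinearMap.map_zero])
  refine ⟨Projectivization.mk K _ hφ, ?_, hbr, by rw [hsr]; omega⟩
  have hphi : S11.phi d w O.rep y O'.rep ev ∈
      schemeSpanSub (A1.I ⊓ A2.I ⊓ idealOfSet (Set.range e)) d := by
    intro f hf
    obtain ⟨⟨hf1, hf2⟩, hf3⟩ := hf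
    have g1 := S11.order_ge A1.I A1.homog O.rep y hoy O.rep_nonzero (by rw [hspD]; exact hA1D)
      (by rw [hA1sup, Projectivization.mk_rep]) _ hf1
    have g2 := S11.order_ge A2.I A2.homog O'.rep O.rep hli2 O'.rep_nonzero
      (by rw [hspR]; exact hA2R) (by rw [hA2sup, Projectivization.mk_rep]) _ hf2
    rw [hA1deg, Polynomial.X_pow_dvd_iff] at g1
    rw [hA2deg, Polynomial.X_pow_dvd_iff] at g2
    have e1 := g1 w (by omega)
    have e0 := g1 0 (by omega)
    have e2 := g2 (w-1) (by omega)
    rw [S11.res_coeff_zero] at e0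
    have e3 : ∀ i, MvPolynomial.eval (ev i) (f : PR K m) = 0 := by
      intro i
      have hz := S11.idealOfSet_eval _ _ hf3 (e i) ⟨i, rfl⟩
      have hm : ev i ∈ Submodule.span K {(e i).rep} := by
        rw [← Projectivization.submodule_eq, he']; exact Submodule.mem_span_singleton_self _
      obtain ⟨a, ha⟩ := Submodule.mem_span_singleton.mp hm
      rw [← ha, S11.eval_smul' f.2, hz, mul_zero]
    simp only [S11.phi, LinearMap.add_apply, LinearMap.sum_apply, S11.psi_apply, S11.nu_apply,
      e0, e1, e2, e3, Finset.sum_const_zero, add_zero]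
  have hm : (Projectivization.mk K _ hφ).rep ∈ (Projectivization.mk K _ hφ).submodule := by
    rw [Projectivization.submodule_eq]; exact Submodule.mem_span_singleton_self _
  rw [Projectivization.submodule_mk] at hm
  obtain ⟨a, ha⟩ := Submodule.mem_span_singleton.mp hm
  change (Projectivization.mk K _ hφ).rep ∈ _
  rw [← ha]
  exact Submodule.smul_mem _ _ hphi
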